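/- arXiv:2201.10791 — 10 statements merged into one kernel-verified Lean document; each statement's English description precedes it below -/
import Mathlib

section
/- Let k and d be positive integers with d ≤ k. Let D = (V, A) be a digraph such that Δ⁻(D) ≤ k+1 and γ(D) ≤ k + (d−k)/(d+1), i.e. (d+1)·|A[X]| ≤ d(k+1)·(|X|−1) for every X ⊆ V with |X| ≥ 2. Then A can be partitioned into k+1 branchings B₁, …, B_k, B_{k+1} such that Δ⁺(B_{k+1}) ≤ d, i.e. every vertex is the tail of at most d arcs of B_{k+1}. -/
open Finset

/-- A finite arc set with at most one arc into each vertex whose arcs increase some rank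
function, so that it contains no directed cycle. -/
def IsRankedBranching {V A : Type*} (tail head : A → V) (B : Finset A) : Prop :=
  Set.InjOn head B ∧ ∃ r : V → ℕ, ∀ a ∈ B, r (tail a) < r (head a)

namespace IsRankedBranching

variable {V A : Type*} {tail head : A → V} {B : Finset A}

theorem empty : IsRankedBranching tail head ∅ := by
  simp [IsRankedBranching]

theorem insert [DecidableEq A] (hB : IsRankedBranching tail head B) {a : A}
    (hne : tail a ≠ head a) (hhead : ∀ b ∈ B, head b ≠ head a)
    (htail : ∀ b ∈ B, tail b ≠ head a) :
    IsRankedBranching tail head (insert a B) := by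
  classical
  obtain ⟨hinj, r, hr⟩ := hB
  refine ⟨?_, Function.update r (head a) (r (tail a) + 1), ?_⟩
  · intro x hx y hy hxy
    simp only [coe_insert, Set.mem_insert_iff, mem_coe] at hx hy
    rcases hx with rfl | hx <;> rcases hy with rfl | hy
    · rfl
    · exact absurd hxy.symm (hhead y hy)
    · exact absurd hxy (hhead x hx)
    · exact hinj hx hy hxy
  · intro b hb
    rcases mem_insert.1 hb with rfl | hb
    · simp [Function.update_of_ne hne]
    · rw [Function.update_of_ne (htail b hb), Function.update_of_ne (hhead b hb)]
      exact hr b hb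

theorem ncard_head_le_one (hB : IsRankedBranching tail head B) (v : V) :
    {a : A | a ∈ B ∧ head a = v}.ncard ≤ 1 := by
  rw [Set.ncard_le_one (B.finite_toSet.subset fun a ha => ha.1)]
  rintro a ⟨ha, rfl⟩ b ⟨hb, hab⟩
  exact hB.1 ha hb hab.symm

theorem ncard_induce_le [Finite V] (hB : IsRankedBranching tail head B) {X : Set V}
    (hX : X.Nonempty) :
    {a : A | a ∈ B ∧ tail a ∈ X ∧ head a ∈ X}.ncard ≤ X.ncard - 1 := by
  obtain ⟨hinj, r, hr⟩ := hB
  obtain ⟨m, hm, hmin⟩ := Set.exists_min_image X r X.toFinite hX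
  rw [← Set.ncard_sdiff_singleton_of_mem hm]
  refine Set.ncard_le_ncard_of_injOn head ?_ ?_ (Set.toFinite _)
  · rintro a ⟨ha, htX, hhX⟩
    refine ⟨hhX, fun h => ?_⟩
    rw [Set.mem_singleton_iff] at h
    have h₁ := hr a ha
    have h₂ := hmin _ htX
    rw [h] at h₁
    omega
  · exact fun a ha b hb hab => hinj ha.1 hb.1 hab

end IsRankedBranching

/-- Growing a branching arc by arc, while maintaining the invariant `P`, until its heads
are all of `T`. -/
theorem exists_isRankedBranching_of_extend {V A : Type*} [DecidableEq V] [DecidableEq A]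
    (tail head : A → V) (T : Finset V) (P : Finset A → Prop) (h₀ : P ∅)
    (hext : ∀ F : Finset A, P F → (T \ F.image head).Nonempty →
      ∃ a, head a ∈ T \ F.image head ∧ tail a ∉ T \ F.image head ∧ P (insert a F)) :
    ∃ F : Finset A, IsRankedBranching tail head F ∧ P F ∧ F.image head = T := by
  have key : ∀ n : ℕ, ∀ F : Finset A, IsRankedBranching tail head F → P F →
      F.image head ⊆ T → (∀ a ∈ F, tail a ∉ T \ F.image head) →
      #(T \ F.image head) = n →
      ∃ F : Finset A, IsRankedBranching tail head F ∧ P F ∧ F.image head = T := by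
    intro n
    induction n with
    | zero =>
      intro F hF hP hsub _ hcard
      exact ⟨F, hF, hP, hsub.antisymm (sdiff_eq_empty_iff_subset.1 (card_eq_zero.1 hcard))⟩
    | succ n ih =>
      intro F hF hP hsub htail hcard
      obtain ⟨a, hha, hta, hPa⟩ := hext F hP (card_pos.1 (by omega))
      have hU : T \ (insert a F).image head = (T \ F.image head).erase (head a) := by
        ext v
        simp only [image_insert, mem_sdiff, mem_insert, mem_erase]
        tauto
      have hhaF : ∀ b ∈ F, head b ≠ head a := fun b hb h =>
        (mem_sdiff.1 hha).2 (h ▸ mem_image_of_mem head hb)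
      refine ih (insert a F) (hF.insert (fun h => hta (h ▸ hha)) hhaF
        fun b hb h => htail b hb (h ▸ hha)) hPa ?_ ?_ ?_
      · rw [image_insert]
        exact insert_subset (mem_sdiff.1 hha).1 hsub
      · intro b hb h
        rw [hU] at h
        rcases mem_insert.1 hb with rfl | hb
        · exact hta (mem_of_mem_erase h)
        · exact htail b hb (mem_of_mem_erase h)
      · rw [hU, card_erase_of_mem hha, hcard]
        rfl
  exact key _ ∅ .empty h₀ (by simp) (by simp) rfl

section Edmonds

variable {V A : Type*} [DecidableEq V] (tail head : A → V)

/-- The arcs of `E` entering the vertex set `X`. -/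
def enteringArcs (E : Finset A) (X : Finset V) : Finset A :=
  {a ∈ E | head a ∈ X ∧ tail a ∉ X}

theorem card_enteringArcs_inter_add_union_le (E : Finset A) (X Y : Finset V) :
    #(enteringArcs tail head E (X ∩ Y)) + #(enteringArcs tail head E (X ∪ Y)) ≤
      #(enteringArcs tail head E X) + #(enteringArcs tail head E Y) := by
  simp only [enteringArcs, card_filter, ← sum_add_distrib]
  refine sum_le_sum fun a _ => ?_
  by_cases h₁ : head a ∈ X <;> by_cases h₂ : head a ∈ Y <;> by_cases h₃ : tail a ∈ X <;>
    by_cases h₄ : tail a ∈ Y <;> simp [h₁, h₂, h₃, h₄]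

variable [DecidableEq A]

/-- The inductive step of Edmonds' theorem: a branching with head set `T` whose removal
leaves at least `k` arcs entering each nonempty subset of `T`. -/
theorem exists_isRankedBranching_sdiff_cut (T : Finset V) (k : ℕ) (E : Finset A)
    (hE : ∀ X ⊆ T, X.Nonempty → k + 1 ≤ #(enteringArcs tail head E X)) :
    ∃ F ⊆ E, IsRankedBranching tail head F ∧ F.image head = T ∧
      ∀ X ⊆ T, X.Nonempty → k ≤ #(enteringArcs tail head (E \ F) X) := by
  suffices hext : _ by
    obtain ⟨F, hF, ⟨hFE, hcut⟩, hT⟩ := exists_isRankedBranching_of_extend tail head T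
      (fun F => F ⊆ E ∧ ∀ X ⊆ T, X.Nonempty → k ≤ #(enteringArcs tail head (E \ F) X))
      ⟨empty_subset _, fun X hX hne => by
        rw [sdiff_empty]; exact (Nat.le_succ k).trans (hE X hX hne)⟩ hext
    exact ⟨F, hFE, hF, hT, hcut⟩
  rintro F ⟨hFE, hcut⟩ hU
  set U := T \ F.image head
  have hUT : U ⊆ T := sdiff_subset
  have hheadF : ∀ a, head a ∈ U → a ∉ F := fun a ha haF =>
    (mem_sdiff.1 ha).2 (mem_image_of_mem head haF)
  have hbig : ∀ X ⊆ U, X.Nonempty → k + 1 ≤ #(enteringArcs tail head (E \ F) X) := by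
    intro X hXU hX
    refine (hE X (hXU.trans hUT) hX).trans (card_le_card fun a ha => ?_)
    simp only [enteringArcs, mem_filter, mem_sdiff] at ha ⊢
    exact ⟨⟨ha.1, hheadF a (hXU ha.2.1)⟩, ha.2⟩
  have hstep : ∃ a ∈ E \ F, head a ∈ U ∧ tail a ∉ U ∧ ∀ Y ⊆ T, head a ∈ Y → tail a ∉ Y →
      k + 1 ≤ #(enteringArcs tail head (E \ F) Y) := by
    let tight : Finset (Finset V) :=
      {X ∈ T.powerset | (X ∩ U).Nonempty ∧ #(enteringArcs tail head (E \ F) X) = k}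
    rcases tight.eq_empty_or_nonempty with hnone | hsome
    · obtain ⟨a, ha⟩ := card_pos.1 ((Nat.succ_pos k).trans_le (hbig U subset_rfl hU))
      simp only [enteringArcs, mem_filter] at ha
      refine ⟨a, ha.1, ha.2.1, ha.2.2, fun Y hY haY _ => ?_⟩
      refine lt_of_le_of_ne (hcut Y hY ⟨_, haY⟩) fun h => ?_
      have : Y ∈ tight :=
        mem_filter.2 ⟨mem_powerset.2 hY, ⟨_, mem_inter.2 ⟨haY, ha.2.1⟩⟩, h.symm⟩
      simp [hnone] at this
    · obtain ⟨X, hX, hmin⟩ := exists_min_image tight card hsome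
      obtain ⟨hXT, hXU, hXk⟩ := mem_filter.1 hX
      rw [mem_powerset] at hXT
      have hlt : #(enteringArcs tail head (E \ F) X) <
          #(enteringArcs tail head (E \ F) (X ∩ U)) := by
        have := hbig (X ∩ U) inter_subset_right hXU
        omega
      obtain ⟨a, ha, haX⟩ := exists_mem_notMem_of_card_lt_card hlt
      simp only [enteringArcs, mem_filter, mem_inter] at ha haX
      obtain ⟨haEF, ⟨hhX, hhU⟩, htXU⟩ := ha
      have htX : tail a ∈ X := by
        by_contra h
        exact haX ⟨haEF, hhX, h⟩
      refine ⟨a, haEF, hhU, fun h => htXU ⟨htX, h⟩, fun Y hY hhY htY => ?_⟩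
      refine lt_of_le_of_ne (hcut Y hY ⟨_, hhY⟩) fun h => ?_
      have hsub := card_enteringArcs_inter_add_union_le tail head (E \ F) X Y
      have hi := hcut (X ∩ Y) (inter_subset_left.trans hXT) ⟨_, mem_inter.2 ⟨hhX, hhY⟩⟩
      have hu := hcut (X ∪ Y) (union_subset hXT hY) ⟨_, mem_union_left _ hhX⟩
      have hXY : X ∩ Y ∈ tight :=
        mem_filter.2 ⟨mem_powerset.2 (inter_subset_left.trans hXT),
          ⟨head a, by simp [hhX, hhY, hhU]⟩, by omega⟩
      have hss : X ∩ Y ⊂ X :=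
        (ssubset_iff_of_subset inter_subset_left).2
          ⟨tail a, htX, fun h => htY (mem_inter.1 h).2⟩
      exact absurd (hmin _ hXY) (not_le.2 (card_lt_card hss))
  obtain ⟨a, haEF, hhU, htU, ha⟩ := hstep
  refine ⟨a, hhU, htU, insert_subset (mem_sdiff.1 haEF).1 hFE, fun Y hY hne => ?_⟩
  have heq : enteringArcs tail head (E \ insert a F) Y =
      (enteringArcs tail head (E \ F) Y).erase a := by
    ext b
    simp only [enteringArcs, mem_filter, mem_sdiff, mem_insert, mem_erase]
    tauto
  rw [heq]
  by_cases haY : head a ∈ Y ∧ tail a ∉ Y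
  · have h₁ := ha Y hY haY.1 haY.2
    have h₂ := pred_card_le_card_erase (s := enteringArcs tail head (E \ F) Y) (a := a)
    omega
  · have haN : a ∉ enteringArcs tail head (E \ F) Y := fun h => haY (mem_filter.1 h).2
    rw [erase_eq_of_notMem haN]
    exact hcut Y hY hne

/-- **Edmonds' disjoint branchings theorem**: if at least `k` arcs enter each nonempty subset
of `T`, then there are `k` disjoint branchings, each having head set exactly `T`. -/
theorem exists_disjoint_isRankedBranching (T : Finset V) (k : ℕ) (E : Finset A)
    (hE : ∀ X ⊆ T, X.Nonempty → k ≤ #(enteringArcs tail head E X)) :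
    ∃ F : Fin k → Finset A, (∀ i j, i ≠ j → Disjoint (F i) (F j)) ∧
      ∀ i, F i ⊆ E ∧ IsRankedBranching tail head (F i) ∧ (F i).image head = T := by
  induction k generalizing E with
  | zero => exact ⟨fun _ => ∅, fun i => i.elim0, fun i => i.elim0⟩
  | succ k ih =>
    obtain ⟨F₀, hF₀E, hF₀, hF₀T, hcut⟩ :=
      exists_isRankedBranching_sdiff_cut tail head T k E hE
    obtain ⟨F, hdisj, hF⟩ := ih (E \ F₀) hcut
    have h₀ : ∀ i, Disjoint F₀ (F i) := fun i =>
      disjoint_sdiff.mono_right (hF i).1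
    refine ⟨Fin.cons F₀ F, fun i j hij => ?_, fun i => ?_⟩
    · cases i using Fin.cases <;> cases j using Fin.cases
      · exact absurd rfl hij
      · exact h₀ _
      · exact (h₀ _).symm
      · exact hdisj _ _ fun h => hij (congrArg Fin.succ h)
    · cases i using Fin.cases
      · exact ⟨hF₀E, hF₀, hF₀T⟩
      · exact ⟨(hF _).1.trans sdiff_subset, (hF _).2⟩

end Edmonds

/-- **Frank's theorem**: an arc set `E` with all in-degrees at most `k` and at most
`k * (|X| - 1)` arcs inside each nonempty vertex set `X` decomposes into `k` branchings. -/
theorem exists_isRankedBranching_partition {V A : Type*} [Fintype V] [DecidableEq V]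
    [DecidableEq A] (tail head : A → V) (k : ℕ) (E : Finset A)
    (hin : ∀ v, #{a ∈ E | head a = v} ≤ k)
    (hγ : ∀ X : Finset V, X.Nonempty →
      #{a ∈ E | tail a ∈ X ∧ head a ∈ X} ≤ k * (#X - 1)) :
    ∃ F : Fin k → Finset A, (∀ i j, i ≠ j → Disjoint (F i) (F j)) ∧
      univ.biUnion F = E ∧ ∀ i, IsRankedBranching tail head (F i) := by
  let R := Σ v : V, Fin (k - #{a ∈ E | head a = v})
  let tail' : A ⊕ R → Option V := Sum.elim (fun a => some (tail a)) (fun _ => none)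
  let head' : A ⊕ R → Option V := Sum.elim (fun a => some (head a)) (fun p => some p.1)
  let E' : Finset (A ⊕ R) := E.disjSum univ
  have hcount : ∀ X : Finset V, #{a ∈ E | head a ∈ X} + #{p : R | p.1 ∈ X} = k * #X := by
    intro X
    have h₁ : #{a ∈ E | head a ∈ X} = ∑ v ∈ X, #{a ∈ E | head a = v} := by
      rw [card_eq_sum_card_fiberwise (f := head) (t := X) fun a ha => by
        exact (mem_filter.1 ha).2]
      refine sum_congr rfl fun v hv => congrArg card ?_
      ext a
      simp only [mem_filter]
      constructor
      · tauto
      · rintro ⟨ha, rfl⟩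
        exact ⟨⟨ha, hv⟩, rfl⟩
    have h₂ : #{p : R | p.1 ∈ X} = ∑ v ∈ X, (k - #{a ∈ E | head a = v}) := by
      have : ({p : R | p.1 ∈ X} : Finset R) = X.sigma fun _ => univ := by
        ext p
        rw [mem_sigma]
        simp
      rw [this, card_sigma]
      simp
    rw [h₁, h₂, ← sum_add_distrib, sum_congr rfl fun v _ => Nat.add_sub_cancel' (hin v)]
    simp [mul_comm]
  have hcut : ∀ X' ⊆ (univ : Finset V).map Function.Embedding.some, X'.Nonempty →
      k ≤ #(enteringArcs tail' head' E' X') := by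
    intro X' hX' hne
    obtain ⟨X, -, rfl⟩ := subset_map_iff.1 hX'
    have hne : X.Nonempty := by simpa using hne
    have hset : enteringArcs tail' head' E' (X.map Function.Embedding.some) =
        ({a ∈ E | head a ∈ X ∧ tail a ∉ X} : Finset A).disjSum {p : R | p.1 ∈ X} := by
      ext (a | p) <;> simp [enteringArcs, E', tail', head']
    have hsplit : #{a ∈ E | head a ∈ X} =
        #{a ∈ E | tail a ∈ X ∧ head a ∈ X} + #{a ∈ E | head a ∈ X ∧ tail a ∉ X} := by
      rw [← card_filter_add_card_filter_not (s := {a ∈ E | head a ∈ X}) fun a => tail a ∈ X,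
        filter_filter, filter_filter]
      simp only [and_comm]
    rw [hset, card_disjSum]
    have h₁ := hcount X
    have h₂ := hγ X hne
    have h₃ : k * (#X - 1) + k = k * #X := by
      rw [← Nat.mul_succ, Nat.succ_eq_add_one, Nat.sub_add_cancel hne.card_pos]
    omega
  obtain ⟨F, hdisj, hF⟩ := exists_disjoint_isRankedBranching tail' head' _ k E' hcut
  have hunion : univ.biUnion F = E' := by
    refine eq_of_subset_of_card_le (biUnion_subset.2 fun i _ => (hF i).1) ?_
    rw [card_biUnion fun i _ j _ hij => hdisj i j hij]
    have h₁ : ∀ i, #(F i) = Fintype.card V := fun i => by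
      rw [← card_image_of_injOn (hF i).2.1.1, (hF i).2.2, card_map, card_univ]
    have h₂ := hcount univ
    simp only [mem_univ, filter_true, card_univ] at h₂
    simp only [h₁, sum_const, card_univ, Fintype.card_fin, smul_eq_mul, E', card_disjSum]
    exact h₂.le
  refine ⟨fun i => (F i).toLeft, fun i j hij => ?_, ?_, fun i => ?_⟩
  · rw [disjoint_left]
    intro a hai haj
    exact disjoint_left.1 (hdisj i j hij) (mem_toLeft.1 hai) (mem_toLeft.1 haj)
  · ext a
    have := Finset.ext_iff.1 hunion (Sum.inl a)
    simpa [E'] using this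
  · obtain ⟨-, ⟨hinj, r, hr⟩, -⟩ := hF i
    refine ⟨fun a ha b hb hab => ?_, fun v => r (some v), fun a ha => ?_⟩
    · exact Sum.inl_injective
        (hinj (mem_toLeft.1 ha) (mem_toLeft.1 hb) (congrArg some hab))
    · exact hr _ (mem_toLeft.1 ha)

/-- If every nonempty `S ⊆ T` satisfies `(d + 1) * |S| ≤ d * |S ∪ N⁻(S)|`, then some branching
with head set `T` has all out-degrees at most `d`. -/
theorem exists_isRankedBranching_outDegree_le {V A : Type*} [DecidableEq V] [Fintype A]
    [DecidableEq A] (tail head : A → V) (d : ℕ) (T : Finset V)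
    (hT : ∀ S ⊆ T, S.Nonempty →
      (d + 1) * #S ≤ d * #(S ∪ image tail {a | head a ∈ S})) :
    ∃ B : Finset A, IsRankedBranching tail head B ∧ B.image head = T ∧
      ∀ v, #{a ∈ B | tail a = v} ≤ d := by
  let nbr : V → Finset V := fun t => insert t (image tail {a | head a = t})
  have hall : ∀ S : Finset (T × Fin (d + 1)),
      #S ≤ #(S.biUnion fun p => nbr p.1 ×ˢ (univ : Finset (Fin d))) := by
    intro S
    rcases S.eq_empty_or_nonempty with rfl | hS
    · simp
    let S₀ : Finset V := S.image fun p => (p.1 : V)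
    have hS₀ : S₀ ⊆ T := by
      intro v hv
      obtain ⟨p, -, rfl⟩ := mem_image.1 hv
      exact p.1.2
    have h₁ : #S ≤ (d + 1) * #S₀ := by
      have : #S ≤ #(S₀ ×ˢ (univ : Finset (Fin (d + 1)))) :=
        card_le_card_of_injOn (fun p => ((p.1 : V), p.2))
          (fun p hp => by
            exact mem_product.2 ⟨mem_image_of_mem _ hp, mem_univ _⟩)
          (fun p _ q _ h => by
            simp only [Prod.mk.injEq] at h
            exact Prod.ext (Subtype.ext h.1) h.2)
      rwa [card_product, card_univ, Fintype.card_fin, mul_comm] at this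
    have h₂ := hT S₀ hS₀ (hS.image _)
    have h₃ : (S.biUnion fun p => nbr p.1 ×ˢ (univ : Finset (Fin d))) =
        (S₀ ∪ image tail {a | head a ∈ S₀}) ×ˢ univ := by
      ext ⟨v, c⟩
      simp only [mem_biUnion, mem_product, mem_univ, and_true, nbr, mem_insert, mem_image,
        mem_filter, true_and, mem_union, S₀]
      constructor
      · rintro ⟨p, hp, rfl | ⟨a, ha, rfl⟩⟩
        · exact Or.inl ⟨p, hp, rfl⟩
        · exact Or.inr ⟨a, ⟨p, hp, ha.symm⟩, rfl⟩
      · rintro (⟨p, hp, rfl⟩ | ⟨a, ⟨p, hp, ha⟩, rfl⟩)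
        · exact ⟨p, hp, Or.inl rfl⟩
        · exact ⟨p, hp, Or.inr ⟨a, ha.symm, rfl⟩⟩
    rw [h₃, card_product, card_univ, Fintype.card_fin, mul_comm _ d]
    exact h₁.trans h₂
  obtain ⟨f, hf, hfmem⟩ := (all_card_le_biUnion_card_iff_exists_injective _).1 hall
  have hfmem : ∀ p, (f p).1 ∈ nbr p.1 := fun p => (mem_product.1 (hfmem p)).1
  have hext : ∀ F : Finset A,
      (∀ a ∈ F, ∃ p : T × Fin (d + 1), (p.1 : V) = head a ∧ (f p).1 = tail a) →
      (T \ F.image head).Nonempty →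
      ∃ a, head a ∈ T \ F.image head ∧ tail a ∉ T \ F.image head ∧
        ∀ b ∈ insert a F, ∃ p : T × Fin (d + 1), (p.1 : V) = head b ∧ (f p).1 = tail b := by
    intro F hP hU
    set U := T \ F.image head
    have hUT : U ⊆ T := sdiff_subset
    have hexit : ∃ p : T × Fin (d + 1), (p.1 : V) ∈ U ∧ (f p).1 ∉ U := by
      by_contra! hcon
      have hle : #(U ×ˢ (univ : Finset (Fin (d + 1)))) ≤
          #(U ×ˢ (univ : Finset (Fin d))) := by
        refine card_le_card_of_forall_subsingleton
          (fun q y => ∃ h : q.1 ∈ T, f (⟨q.1, h⟩, q.2) = y) ?_ ?_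
        · intro q hq
          have hqU := (mem_product.1 hq).1
          exact ⟨_, mem_product.2 ⟨hcon (⟨q.1, hUT hqU⟩, q.2) hqU, mem_univ _⟩, hUT hqU, rfl⟩
        · rintro y - q ⟨-, hq, hqy⟩ q' ⟨-, hq', hqy'⟩
          have := hf (hqy.trans hqy'.symm)
          simp only [Prod.mk.injEq, Subtype.mk.injEq] at this
          exact Prod.ext this.1 this.2
      simp only [card_product, card_univ, Fintype.card_fin] at hle
      have := hU.card_pos
      nlinarith
    obtain ⟨p, hpU, hfU⟩ := hexit
    rcases mem_insert.1 (hfmem p) with h | h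
    · exact absurd (h ▸ hpU) hfU
    · obtain ⟨a, ha, hta⟩ := mem_image.1 h
      have hha : head a = p.1 := (mem_filter.1 ha).2
      refine ⟨a, hha ▸ hpU, hta ▸ hfU, fun b hb => ?_⟩
      rcases mem_insert.1 hb with rfl | hb
      · exact ⟨p, hha.symm, hta.symm⟩
      · exact hP b hb
  obtain ⟨B, hB, hP, hBT⟩ := exists_isRankedBranching_of_extend tail head T
    (fun F => ∀ a ∈ F, ∃ p : T × Fin (d + 1), (p.1 : V) = head a ∧ (f p).1 = tail a)
    (by simp) hext
  refine ⟨B, hB, hBT, fun v => ?_⟩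
  have hle : #{a ∈ B | tail a = v} ≤ #(univ : Finset (Fin d)) := by
    refine card_le_card_of_forall_subsingleton
      (fun a c => ∃ p : T × Fin (d + 1), (p.1 : V) = head a ∧ f p = (v, c)) ?_ ?_
    · intro a ha
      obtain ⟨haB, rfl⟩ := mem_filter.1 ha
      obtain ⟨p, hp, hfp⟩ := hP a haB
      exact ⟨(f p).2, mem_univ _, p, hp, Prod.ext hfp rfl⟩
    · rintro c - a ⟨ha, p, hp, hfp⟩ b ⟨hb, q, hq, hfq⟩
      have hpq : p = q := hf (hfp.trans hfq.symm)
      exact hB.1 (mem_filter.1 ha).1 (mem_filter.1 hb).1 (by rw [← hp, ← hq, hpq])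
  simpa using hle


/-- digraph with `Δ⁻ ≤ k+1` and fractional arboricity at most
`k + (d-k)/(d+1)` (with `d ≤ k`) decomposes into `k+1` branchings, the last
having out-degree at most `d` everywhere. -/
theorem stmt0 {V A : Type} [Fintype V] [Fintype A]
    (tail head : A → V) (hloop : ∀ a : A, tail a ≠ head a)
    (k d : ℕ) (hk : 0 < k) (hd : 0 < d) (hdk : d ≤ k)
    (hin : ∀ v : V, {a : A | head a = v}.ncard ≤ k + 1)
    (hγ : ∀ X : Set V, 2 ≤ X.ncard →
      (d + 1) * {a : A | tail a ∈ X ∧ head a ∈ X}.ncard ≤ d * (k + 1) * (X.ncard - 1)) :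
    ∃ B : Fin (k + 1) → Set A,
      (∀ i j, i ≠ j → Disjoint (B i) (B j)) ∧
      (⋃ i, B i) = Set.univ ∧
      (∀ i,
        (∀ v : V, {a : A | a ∈ B i ∧ head a = v}.ncard ≤ 1) ∧
        (∀ X : Set V, X.Nonempty →
          {a : A | a ∈ B i ∧ tail a ∈ X ∧ head a ∈ X}.ncard ≤ X.ncard - 1)) ∧
      (∀ v : V, {a : A | a ∈ B (Fin.last k) ∧ tail a = v}.ncard ≤ d) := by
  classical
  have hin' : ∀ v, #{a | head a = v} ≤ k + 1 := fun v => by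
    rw [← Set.ncard_coe_finset]
    simpa using hin v
  have hγ' : ∀ X : Finset V, X.Nonempty →
      (d + 1) * #{a | tail a ∈ X ∧ head a ∈ X} ≤ d * (k + 1) * (#X - 1) := by
    intro X hX
    rcases Nat.lt_or_ge (#X) 2 with h | h
    · obtain ⟨v, rfl⟩ := card_eq_one.1 (by have := hX.card_pos; omega : #X = 1)
      have : ({a | tail a ∈ ({v} : Finset V) ∧ head a ∈ ({v} : Finset V)} : Finset A) = ∅ :=
        filter_eq_empty_iff.2 fun a _ ha =>
          hloop a ((mem_singleton.1 ha.1).trans (mem_singleton.1 ha.2).symm)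
      rw [this, card_empty, mul_zero]
      exact Nat.zero_le _
    · have := hγ X (by rwa [Set.ncard_coe_finset])
      rw [← Set.ncard_coe_finset, ← Set.ncard_coe_finset X]
      simpa using this
  let T : Finset V := {v | #{a | head a = v} = k + 1}
  obtain ⟨B, hB, hBT, hBd⟩ := exists_isRankedBranching_outDegree_le tail head d T <| by
    intro S hST hS
    set X := S ∪ image tail {a | head a ∈ S}
    have hX : X.Nonempty := hS.mono subset_union_left
    have h₁ : (k + 1) * #S ≤ #{a | tail a ∈ X ∧ head a ∈ X} := by
      calc (k + 1) * #S = ∑ v ∈ S, #{a | head a = v} := by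
            rw [sum_congr rfl fun v hv => (mem_filter.1 (hST hv)).2]
            simp [mul_comm]
        _ = #(S.biUnion fun v => ({a | head a = v} : Finset A)) := by
            refine (card_biUnion fun v _ w _ hvw => disjoint_left.2 fun a ha hb => hvw ?_).symm
            rw [← (mem_filter.1 ha).2, (mem_filter.1 hb).2]
        _ ≤ _ := by
            refine card_le_card fun a ha => ?_
            have haS : head a ∈ S := by simpa using ha
            exact mem_filter.2 ⟨mem_univ _, mem_union_right _
              (mem_image_of_mem tail (mem_filter.2 ⟨mem_univ _, haS⟩)), mem_union_left _ haS⟩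
    refine Nat.le_of_mul_le_mul_left (c := k + 1) ?_ k.succ_pos
    calc (k + 1) * ((d + 1) * #S) = (d + 1) * ((k + 1) * #S) := by ring
      _ ≤ d * (k + 1) * (#X - 1) := (Nat.mul_le_mul_left _ h₁).trans (hγ' X hX)
      _ ≤ d * (k + 1) * #X := Nat.mul_le_mul_left _ (Nat.sub_le _ _)
      _ = (k + 1) * (d * #X) := by ring
  obtain ⟨F, hdisj, hunion, hF⟩ := exists_isRankedBranching_partition tail head k Bᶜ
    (by
      intro v
      by_cases hv : v ∈ T
      · obtain ⟨b, hb, hbv⟩ := mem_image.1 (hBT ▸ hv)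
        have hlt : #{a ∈ Bᶜ | head a = v} < #{a | head a = v} := by
          refine card_lt_card ((ssubset_iff_of_subset
            (filter_subset_filter _ (subset_univ _))).2 ⟨b, by simp [hbv], by simp [hb]⟩)
        have := hin' v
        omega
      · have h₁ : #{a | head a = v} ≠ k + 1 := by simpa [T] using hv
        have h₂ := hin' v
        have h₃ : #{a ∈ Bᶜ | head a = v} ≤ #{a | head a = v} :=
          card_le_card (filter_subset_filter _ (subset_univ _))
        omega)
    (by
      intro X hX
      refine (card_le_card (filter_subset_filter _ (subset_univ _))).trans ?_
      refine Nat.le_of_mul_le_mul_left (c := d + 1) ((hγ' X hX).trans ?_) d.succ_pos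
      rw [← mul_assoc]
      exact Nat.mul_le_mul_right _ (by nlinarith))
  have hFB : ∀ i, Disjoint (F i) B := fun i =>
    (disjoint_compl_left (a := B)).mono_left (hunion ▸ subset_biUnion_of_mem F (mem_univ i))
  let G : Fin (k + 1) → Finset A := Fin.snoc F B
  have hGlast : G (Fin.last k) = B := Fin.snoc_last ..
  have hGcast : ∀ i : Fin k, G i.castSucc = F i := fun i => Fin.snoc_castSucc ..
  have hG : ∀ i, IsRankedBranching tail head (G i) := by
    intro i
    cases i using Fin.lastCases with
    | last => rwa [hGlast]
    | cast i => rw [hGcast]; exact hF i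
  refine ⟨fun i => G i, fun i j hij => ?_, ?_, fun i => ⟨fun v => ?_, fun X hX => ?_⟩,
    fun v => ?_⟩
  · rw [disjoint_coe]
    cases i using Fin.lastCases with
    | last =>
      cases j using Fin.lastCases with
      | last => exact absurd rfl hij
      | cast j => rw [hGlast, hGcast]; exact (hFB j).symm
    | cast i =>
      cases j using Fin.lastCases with
      | last => rw [hGlast, hGcast]; exact hFB i
      | cast j =>
        rw [hGcast, hGcast]
        exact hdisj i j fun h => hij (congrArg Fin.castSucc h)
  · refine Set.eq_univ_of_forall fun a => Set.mem_iUnion.2 ?_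
    by_cases ha : a ∈ B
    · exact ⟨Fin.last k, by simpa [hGlast] using ha⟩
    · obtain ⟨i, -, hi⟩ := mem_biUnion.1 (hunion ▸ mem_compl.2 ha)
      exact ⟨i.castSucc, by simpa [hGcast] using hi⟩
  · exact (hG i).ncard_head_le_one v
  · exact (hG i).ncard_induce_le hX
  · have := hBd v
    rw [← Set.ncard_coe_finset] at this
    simpa [hGlast] using this
end

section
/- Let k and d be positive integers. Let D = (V, A) be a digraph such that Δ⁻(D) ≤ k+1 and (1/2)·mad(D) ≤ k + (d−k)/(d+1), i.e. (d+1)·|A[X]| ≤ d(k+1)·|X| for every nonempty X ⊆ V. Then A can be partitioned into k+1 pseudo-branchings C₁, …, C_k, C_{k+1} such that Δ⁺(C_{k+1}) ≤ d, i.e. every vertex is the tail of at most d arcs of C_{k+1}. -/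
/-- If every set of indices has at most `d` times as many elements as neighbours, then each index
can be assigned a neighbour so that no neighbour is used more than `d` times. -/
theorem exists_choice_fiber_ncard_le {ι α : Type*} [Finite ι] [DecidableEq α] (d : ℕ)
    (N : ι → Finset α) (hN : ∀ S : Finset ι, S.card ≤ d * (S.biUnion N).card) :
    ∃ f : ι → α, (∀ i, f i ∈ N i) ∧ ∀ x, {i | f i = x}.ncard ≤ d := by
  have hall : ∀ S : Finset ι,
      S.card ≤ (S.biUnion fun i => N i ×ˢ (Finset.univ : Finset (Fin d))).card := by
    intro S
    have hprod : (S.biUnion fun i => N i ×ˢ (Finset.univ : Finset (Fin d))) =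
        S.biUnion N ×ˢ Finset.univ := by
      ext ⟨x, j⟩
      simp
    rw [hprod, Finset.card_product, Finset.card_univ, Fintype.card_fin, mul_comm]
    exact hN S
  obtain ⟨f, hf, hmem⟩ := (Finset.all_card_le_biUnion_card_iff_exists_injective _).1 hall
  refine ⟨fun i => (f i).1, fun i => (Finset.mem_product.1 (hmem i)).1, fun x => ?_⟩
  have hinj : Set.InjOn (fun i => (f i).2) {i | (f i).1 = x} := fun i hi j hj hij =>
    hf (Prod.ext ((show (f i).1 = x from hi).trans (show (f j).1 = x from hj).symm) hij)
  simpa using Set.ncard_le_ncard_of_injOn (t := Set.univ) _ (fun _ _ => Set.mem_univ _) hinj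

/-- A set of arcs with in-degree at most `k` can be coloured with `k` colours so that arcs with
the same head get distinct colours. -/
theorem exists_coloring_injOn_fiber {V A : Type*} [Finite A] (head : A → V) (k : ℕ) (hk : 0 < k)
    (B : Set A) (hB : ∀ v, {a | a ∈ B ∧ head a = v}.ncard ≤ k) :
    ∃ e : A → Fin k, ∀ v, Set.InjOn e {a | a ∈ B ∧ head a = v} := by
  have : Nonempty (Fin k) := ⟨⟨0, hk⟩⟩
  have hloc : ∀ v, ∃ e : A → Fin k, Set.InjOn e {a | a ∈ B ∧ head a = v} := by
    intro v
    have hle : {a | a ∈ B ∧ head a = v}.encard ≤ (Set.univ : Set (Fin k)).encard := by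
      rw [← (Set.toFinite {a | a ∈ B ∧ head a = v}).cast_ncard_eq]
      rw [Set.encard_univ, ENat.card_eq_coe_fintype_card, Fintype.card_fin]
      exact_mod_cast hB v
    obtain ⟨e, -, he⟩ := (Set.toFinite {a | a ∈ B ∧ head a = v}).exists_injOn_of_encard_le hle
    exact ⟨e, he⟩
  choose e he using hloc
  refine ⟨fun a => e (head a) a, fun v a ha b hb hab => he v ha hb ?_⟩
  simpa only [ha.2, hb.2] using hab

/-- Under the density condition, one can pick for every vertex of in-degree `k + 1` an arc entering
it so that every vertex is the tail of at most `d` picked arcs. -/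
theorem exists_entering_arcs {V A : Type*} [Finite V] [Finite A] (tail head : A → V) (k d : ℕ)
    (hmad : ∀ X : Set V, X.Nonempty →
      (d + 1) * {a : A | tail a ∈ X ∧ head a ∈ X}.ncard ≤ d * (k + 1) * X.ncard) :
    ∃ g : {v : V // {a : A | head a = v}.ncard = k + 1} → A,
      (∀ v, head (g v) = v) ∧ ∀ x, {v | tail (g v) = x}.ncard ≤ d := by
  classical
  have := Fintype.ofFinite A
  let N : {v : V // {a : A | head a = v}.ncard = k + 1} → Finset V := fun v =>
    (Finset.univ.filter fun a => head a = v).image tail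
  have hN : ∀ S : Finset _, S.card ≤ d * (S.biUnion N).card := by
    intro S
    rcases S.eq_empty_or_nonempty with rfl | hS
    · simp
    let S' : Finset V := S.image Subtype.val
    have hS' : S'.card = S.card := Finset.card_image_of_injective _ Subtype.val_injective
    have hin : (Finset.univ.filter fun a => head a ∈ S').card = (k + 1) * S.card := by
      rw [Finset.card_eq_sum_card_fiberwise (t := S') (f := head) (by intro a; simp), ← hS',
        Finset.sum_const_nat (m := k + 1), mul_comm]
      intro v hv
      obtain ⟨w, -, rfl⟩ := Finset.mem_image.1 hv
      rw [← Set.ncard_coe_finset]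
      refine Eq.trans ?_ w.2
      congr 1
      ext a
      simp only [Finset.coe_filter, Finset.mem_filter, Finset.mem_univ, true_and,
        Set.mem_ofPred_eq]
      exact ⟨fun h => h.2, fun h => ⟨h ▸ hv, h⟩⟩
    have hsub : (k + 1) * S.card ≤ {a : A | tail a ∈ (↑(S' ∪ S.biUnion N) : Set V) ∧
        head a ∈ (↑(S' ∪ S.biUnion N) : Set V)}.ncard := by
      rw [← hin, ← Set.ncard_coe_finset]
      refine Set.ncard_le_ncard ?_ (Set.toFinite _)
      intro a ha
      have ha' : head a ∈ S' := by simpa using ha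
      obtain ⟨w, hw, hwa⟩ := Finset.mem_image.1 ha'
      refine ⟨Finset.mem_union_right _ (Finset.mem_biUnion.2 ⟨w, hw, ?_⟩),
        Finset.mem_union_left _ ha'⟩
      exact Finset.mem_image_of_mem _ (by simp [hwa])
    have hX := hmad (↑(S' ∪ S.biUnion N)) (by
      obtain ⟨w, hw⟩ := hS
      exact ⟨w, Finset.mem_union_left _ (Finset.mem_image_of_mem _ hw)⟩)
    rw [Set.ncard_coe_finset] at hX
    have hun : (S' ∪ S.biUnion N).card ≤ S.card + (S.biUnion N).card :=
      hS' ▸ Finset.card_union_le _ _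
    have h : (k + 1) * ((d + 1) * S.card) ≤ (k + 1) * (d * (S.card + (S.biUnion N).card)) :=
      calc (k + 1) * ((d + 1) * S.card) = (d + 1) * ((k + 1) * S.card) := by ring
        _ ≤ d * (k + 1) * (S' ∪ S.biUnion N).card := (Nat.mul_le_mul_left _ hsub).trans hX
        _ ≤ d * (k + 1) * (S.card + (S.biUnion N).card) := Nat.mul_le_mul_left _ hun
        _ = _ := by ring
    have h' := Nat.le_of_mul_le_mul_left h k.succ_pos
    linarith
  obtain ⟨f, hf, hfd⟩ := exists_choice_fiber_ncard_le d N hN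
  have harc : ∀ v : {v : V // {a : A | head a = v}.ncard = k + 1}, ∃ a, head a = v ∧ tail a = f v :=
    fun v => by simpa [N] using hf v
  choose g hg hgt using harc
  exact ⟨g, hg, fun x => by simpa only [hgt] using hfd x⟩

/-- digraph with `Δ⁻ ≤ k+1` and `(1/2)·mad(D) ≤ k + (d-k)/(d+1)`
decomposes into `k+1` pseudo-branchings, the last having out-degree at most `d`
everywhere. -/
theorem stmt1 {V A : Type} [Fintype V] [Fintype A]
    (tail head : A → V) (hloop : ∀ a : A, tail a ≠ head a)
    (k d : ℕ) (hk : 0 < k) (hd : 0 < d)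
    (hin : ∀ v : V, {a : A | head a = v}.ncard ≤ k + 1)
    (hmad : ∀ X : Set V, X.Nonempty →
      (d + 1) * {a : A | tail a ∈ X ∧ head a ∈ X}.ncard ≤ d * (k + 1) * X.ncard) :
    ∃ C : Fin (k + 1) → Set A,
      (∀ i j, i ≠ j → Disjoint (C i) (C j)) ∧
      (⋃ i, C i) = Set.univ ∧
      (∀ i, ∀ v : V, {a : A | a ∈ C i ∧ head a = v}.ncard ≤ 1) ∧
      (∀ v : V, {a : A | a ∈ C (Fin.last k) ∧ tail a = v}.ncard ≤ d) := by
  classical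
  obtain ⟨g, hg, hgd⟩ := exists_entering_arcs tail head k d hmad
  have hrest : ∀ v, {a | a ∈ (Set.range g)ᶜ ∧ head a = v}.ncard ≤ k := by
    intro v
    have hsub : {a | a ∈ (Set.range g)ᶜ ∧ head a = v} ⊆ {a | head a = v} := fun a ha => ha.2
    by_cases hv : {a : A | head a = v}.ncard = k + 1
    · have hlt := Set.ncard_lt_ncard (hsub.ssubset_of_mem_notMem (a := g ⟨v, hv⟩) (hg ⟨v, hv⟩)
        fun h => h.1 ⟨_, rfl⟩) (Set.toFinite _)
      omega
    · have hle := Set.ncard_le_ncard hsub (Set.toFinite _)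
      have := hin v
      omega
  obtain ⟨e, he⟩ := exists_coloring_injOn_fiber head k hk _ hrest
  let c : A → Fin (k + 1) := fun a => if a ∈ Set.range g then Fin.last k else (e a).castSucc
  have hlast : ∀ a, c a = Fin.last k ↔ a ∈ Set.range g := by
    intro a
    by_cases ha : a ∈ Set.range g
    · simp only [c, if_pos ha, ha]
    · simp only [c, if_neg ha, ha, (Fin.castSucc_lt_last _).ne]
  refine ⟨fun i => {a | c a = i}, ?_, ?_, ?_, ?_⟩
  · intro i j hij
    exact Set.disjoint_left.2 fun a hi hj => hij (Eq.trans (Eq.symm hi) hj)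
  · ext a
    simp
  · intro i v
    refine (Set.ncard_le_one (Set.toFinite _)).2 ?_
    rintro a ⟨ha, hav⟩ b ⟨hb, hbv⟩
    have hab : c a = c b := Eq.trans ha (Eq.symm hb)
    by_cases hra : a ∈ Set.range g
    · have hrb : b ∈ Set.range g := (hlast b).1 (hab ▸ (hlast a).2 hra)
      obtain ⟨x, rfl⟩ := hra
      obtain ⟨y, rfl⟩ := hrb
      exact congrArg g (Subtype.ext ((hg x).symm.trans (hav.trans (hbv.symm.trans (hg y)))))
    · have hrb : b ∉ Set.range g := fun h => hra ((hlast a).1 (hab.trans ((hlast b).2 h)))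
      refine he v ⟨hra, hav⟩ ⟨hrb, hbv⟩ ?_
      simpa only [c, if_neg hra, if_neg hrb, Fin.castSucc_inj] using hab
  · intro v
    have himage : {a | a ∈ {a | c a = Fin.last k} ∧ tail a = v} ⊆ g '' {w | tail (g w) = v} := by
      rintro a ⟨ha, hav⟩
      obtain ⟨w, rfl⟩ := (hlast a).1 ha
      exact ⟨w, hav, rfl⟩
    exact (Set.ncard_le_ncard himage (Set.toFinite _)).trans
      ((Set.ncard_image_le (Set.toFinite _)).trans (hgd v))
end

section
/- For all positive integers k, d and every real ε > 0, there exists a digraph D = (V, A) with the following properties: (i) D is acyclic (it contains no directed cycle); (ii) the underlying graph of D is bipartite (V partitions into two parts such that every arc has its tail in one part and its head in the other); (iii) Δ⁻(D) ≤ k+1; (iv) |A[X]| < (k + (d−k)/(d+1) + ε)·(|X|−1) for every X ⊆ V with |X| ≥ 2 (i.e. γ(D) < k + (d−k)/(d+1) + ε); and (v) A cannot be partitioned into k+1 branchings B₁, …, B_k, B_{k+1} with Δ⁺(B_{k+1}) ≤ d. -/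
/-- `f` is an element of the cycle space over `ZMod 2` of the bipartite multigraph with arcs `A`
from `T` to `H`, expressed by pairing the boundary of `f` with arbitrary test functions. -/
def IsCycleFun {T H A : Type} [Fintype A] (tail : A → T) (head : A → H) (f : A → ZMod 2) : Prop :=
  (∀ φ : T → ZMod 2, ∑ a, φ (tail a) * f a = 0) ∧ ∀ φ : H → ZMod 2, ∑ a, φ (head a) * f a = 0

/-- Every nonzero element of the cycle space has support of size at least `g`. -/
def GirthAtLeast {T H A : Type} [Fintype A] (tail : A → T) (head : A → H) (g : ℕ) : Prop :=
  ∀ f : A → ZMod 2, IsCycleFun tail head f → f ≠ 0 → g ≤ {a | f a ≠ 0}.ncard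

theorem exists_ne_of_sum_test_eq_zero {A W : Type} [Fintype A] (p : A → W) (f : A → ZMod 2)
    (hf : ∀ φ : W → ZMod 2, ∑ a, φ (p a) * f a = 0) {a : A} (ha : f a ≠ 0) :
    ∃ b, b ≠ a ∧ p b = p a ∧ f b ≠ 0 := by
  classical
  by_contra! hcon
  have h := hf (Pi.single (p a) 1)
  rw [Finset.sum_eq_single a] at h
  · simp at h
    exact ha h
  · intro b _ hb
    by_cases hp : p b = p a
    · simp [hcon b hb hp]
    · simp [hp]
  · simp

/-- An arc set with at least as many arcs as vertices supports a nonzero cycle. -/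
theorem exists_isCycleFun_of_card_le {T H A : Type} [Fintype A] (tail : A → T) (head : A → H)
    (Φ : Finset A) (T' : Finset T) (H' : Finset H) (hT : ∀ a ∈ Φ, tail a ∈ T')
    (hH : ∀ a ∈ Φ, head a ∈ H') (hne : Φ.Nonempty) (hcard : T'.card + H'.card ≤ Φ.card) :
    ∃ f : A → ZMod 2, IsCycleFun tail head f ∧ f ≠ 0 ∧ ∀ a, f a ≠ 0 → a ∈ Φ := by
  classical
  obtain ⟨a₀, ha₀⟩ := hne
  set h₀ := head a₀
  let L : (Φ → ZMod 2) →ₗ[ZMod 2] (T' → ZMod 2) × ({h // h ∈ H'.erase h₀} → ZMod 2) :=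
    { toFun := fun f =>
        (fun t => ∑ a, if tail a.1 = t.1 then f a else 0,
          fun h => ∑ a, if head a.1 = h.1 then f a else 0)
      map_add' := by
        intro f g
        ext x <;> simp only [Pi.add_apply, Prod.fst_add, Prod.snd_add,
          ← Finset.sum_add_distrib] <;> exact Finset.sum_congr rfl fun a _ => by split_ifs <;> simp
      map_smul' := by
        intro c f
        ext x <;> simp only [Prod.smul_fst, Prod.smul_snd, Pi.smul_apply, Finset.smul_sum,
          RingHom.id_apply, smul_ite, smul_zero] }
  have hlt : Module.finrank (ZMod 2) ((T' → ZMod 2) × ({h // h ∈ H'.erase h₀} → ZMod 2)) <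
      Module.finrank (ZMod 2) (Φ → ZMod 2) := by
    have hpos : 0 < H'.card := Finset.card_pos.2 ⟨h₀, hH a₀ ha₀⟩
    have herase := Finset.card_erase_of_mem (hH a₀ ha₀)
    rw [Module.finrank_prod, Module.finrank_fintype_fun_eq_card,
      Module.finrank_fintype_fun_eq_card, Module.finrank_fintype_fun_eq_card,
      Fintype.card_coe, Fintype.card_coe, Fintype.card_coe, herase]
    omega
  obtain ⟨f, hfker, hf0⟩ := (Submodule.ne_bot_iff _).1
    (LinearMap.ker_ne_bot_of_finrank_lt (f := L) hlt)
  have hL : L f = 0 := hfker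
  have hLT : ∀ t : T', (∑ a : Φ, if tail a.1 = t.1 then f a else 0) = 0 :=
    fun t => congrFun (congrArg Prod.fst hL) t
  have hLH : ∀ h : {h // h ∈ H'.erase h₀}, (∑ a : Φ, if head a.1 = h.1 then f a else 0) = 0 :=
    fun h => congrFun (congrArg Prod.snd hL) h
  -- pairing with a test function through its values on a finite set containing the image
  have pair : ∀ {W : Type} (p : A → W) (W' : Finset W), (∀ a ∈ Φ, p a ∈ W') → ∀ φ : W → ZMod 2,
      ∑ a : Φ, φ (p a.1) * f a = ∑ w ∈ W', φ w * ∑ a : Φ, if p a.1 = w then f a else 0 := by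
    intro W p W' hW φ
    simp only [Finset.mul_sum]
    rw [Finset.sum_comm]
    refine Finset.sum_congr rfl fun a _ => ?_
    rw [Finset.sum_eq_single (p a.1)]
    · simp
    · intro b _ hb
      simp [hb.symm]
    · intro h
      exact absurd (hW a.1 a.2) h
  have hTφ : ∀ φ : T → ZMod 2, ∑ a : Φ, φ (tail a.1) * f a = 0 := by
    intro φ
    rw [pair tail T' hT]
    exact Finset.sum_eq_zero fun t ht => by rw [hLT ⟨t, ht⟩, mul_zero]
  have hHφ : ∀ φ : H → ZMod 2, ∑ a : Φ, φ (head a.1) * f a = 0 := by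
    have hother : ∀ h ∈ H', h ≠ h₀ → (∑ a : Φ, if head a.1 = h then f a else 0) = 0 :=
      fun h hh hne => hLH ⟨h, Finset.mem_erase.2 ⟨hne, hh⟩⟩
    have key : ∀ φ : H → ZMod 2, ∑ a : Φ, φ (head a.1) * f a =
        φ h₀ * ∑ a : Φ, if head a.1 = h₀ then f a else 0 := by
      intro φ
      rw [pair head H' hH]
      refine Finset.sum_eq_single h₀ (fun h hh hne => by rw [hother h hh hne, mul_zero]) ?_
      intro h
      exact absurd (hH a₀ ha₀) h
    have h1 := key (fun _ => 1)
    have h2 := hTφ (fun _ => 1)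
    rw [h2, one_mul] at h1
    intro φ
    rw [key, ← h1, mul_zero]
  have ext_sum : ∀ ψ : A → ZMod 2, ∑ a, ψ a * (if h : a ∈ Φ then f ⟨a, h⟩ else 0) =
      ∑ a : Φ, ψ a.1 * f a := by
    intro ψ
    rw [← Finset.sum_subset (Finset.subset_univ Φ), ← Finset.sum_coe_sort Φ]
    · exact Finset.sum_congr rfl fun a _ => by simp
    · intro a _ ha
      simp [ha]
  refine ⟨fun a => if h : a ∈ Φ then f ⟨a, h⟩ else 0, ⟨fun φ => ?_, fun φ => ?_⟩, ?_, ?_⟩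
  · rw [ext_sum (fun a => φ (tail a)), hTφ]
  · rw [ext_sum (fun a => φ (head a)), hHφ]
  · intro h
    apply hf0
    ext a
    simpa using congrFun h a.1
  · intro a ha
    by_contra h
    simp [h] at ha

theorem two_mul_card_image_le {A W : Type} [DecidableEq W] (Φ : Finset A) (p : A → W)
    (h : ∀ a ∈ Φ, ∃ b ∈ Φ, b ≠ a ∧ p b = p a) : 2 * (Φ.image p).card ≤ Φ.card := by
  classical
  rw [mul_comm, Finset.card_eq_sum_card_image p Φ, ← smul_eq_mul]
  refine Finset.card_nsmul_le_sum _ _ _ fun w hw => ?_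
  obtain ⟨a, ha, rfl⟩ := Finset.mem_image.1 hw
  obtain ⟨b, hb, hba, hp⟩ := h a ha
  exact Finset.one_lt_card.2 ⟨b, by simp [hb, hp], a, by simp [ha], hba⟩

/-- The tail map of the lift of a multigraph along the voltage group `A → ZMod 2`. -/
def liftTail {T A : Type} (tail : A → T) (x : A × (A → ZMod 2)) : T × (A → ZMod 2) :=
  (tail x.1, x.2)

open Classical in
/-- The head map of the lift of a multigraph along the voltage group `A → ZMod 2`, where the arc
`a` has voltage the indicator of `a`. -/
noncomputable def liftHead {H A : Type} (head : A → H) (x : A × (A → ZMod 2)) :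
    H × (A → ZMod 2) :=
  (head x.1, x.2 + Pi.single x.1 1)

open Classical in
/-- The lift doubles the girth. -/
theorem GirthAtLeast.lift {T H A : Type} [Fintype A] {tail : A → T} {head : A → H} {g : ℕ}
    (hg : GirthAtLeast tail head g) :
    GirthAtLeast (liftTail tail) (liftHead head) (2 * g) := by
  intro f hf hf0
  have fibre : ∀ e, ∑ s, f (e, s) = 0 := by
    intro e
    have h1 := hf.1 (fun x => x.2 e)
    have h2 := hf.2 (fun x => x.2 e)
    simp only [liftTail, liftHead, Pi.add_apply, add_mul, Finset.sum_add_distrib] at h1 h2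
    rw [h1, zero_add, Fintype.sum_prod_type, Finset.sum_eq_single e] at h2
    · simpa using h2
    · intro b _ hb
      simp [hb.symm]
    · simp
  set S : Finset (A × (A → ZMod 2)) := Finset.univ.filter fun x => f x ≠ 0 with hS
  have hSmem : ∀ x, x ∈ S ↔ f x ≠ 0 := by simp [hS]
  set Φ := S.image Prod.fst with hΦ
  have hΦmem : ∀ {x}, f x ≠ 0 → x.1 ∈ Φ := fun hx => Finset.mem_image_of_mem _ ((hSmem _).2 hx)
  have hSΦ : 2 * Φ.card ≤ S.card := by
    refine two_mul_card_image_le S _ fun x hx => ?_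
    by_contra! hcon
    have := fibre x.1
    rw [Finset.sum_eq_single x.2] at this
    · exact (hSmem x).1 hx this
    · intro s _ hs
      by_contra hne
      exact hcon (x.1, s) ((hSmem _).2 hne) (fun h => hs (congrArg Prod.snd h)) rfl
    · simp
  have hT : 2 * (Φ.image tail).card ≤ Φ.card := by
    refine two_mul_card_image_le Φ _ fun a ha => ?_
    obtain ⟨x, hx, rfl⟩ := Finset.mem_image.1 ha
    obtain ⟨y, hyx, hp, hy⟩ := exists_ne_of_sum_test_eq_zero _ f hf.1 ((hSmem x).1 hx)
    simp only [liftTail, Prod.mk.injEq] at hp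
    exact ⟨y.1, hΦmem hy, fun h => hyx (Prod.ext h hp.2), hp.1⟩
  have hH : 2 * (Φ.image head).card ≤ Φ.card := by
    refine two_mul_card_image_le Φ _ fun a ha => ?_
    obtain ⟨x, hx, rfl⟩ := Finset.mem_image.1 ha
    obtain ⟨y, hyx, hp, hy⟩ := exists_ne_of_sum_test_eq_zero _ f hf.2 ((hSmem x).1 hx)
    simp only [liftHead, Prod.mk.injEq] at hp
    refine ⟨y.1, hΦmem hy, fun h => hyx (Prod.ext h ?_), hp.1⟩
    have := hp.2
    rw [h] at this
    exact add_right_cancel this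
  obtain ⟨x, hx⟩ := Function.ne_iff.1 hf0
  obtain ⟨c, hc, hc0, hcΦ⟩ := exists_isCycleFun_of_card_le tail head Φ (Φ.image tail)
    (Φ.image head) (fun a ha => Finset.mem_image_of_mem _ ha)
    (fun a ha => Finset.mem_image_of_mem _ ha) ⟨x.1, hΦmem hx⟩ (by omega)
  have h1 : g ≤ Φ.card := by
    refine (hg c hc hc0).trans ?_
    rw [← Set.ncard_coe_finset]
    exact Set.ncard_le_ncard (fun a ha => hcΦ a ha) (Finset.finite_toSet _)
  have h2 : {a | f a ≠ 0}.ncard = S.card := by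
    rw [← Set.ncard_coe_finset]
    congr 1
    ext x
    simp [hS]
  omega

/-- Biregular bipartite multigraphs of large girth. -/
theorem exists_biregular_girthAtLeast (k d n : ℕ) :
    ∃ (T H A : Type) (_ : Fintype T) (_ : Fintype H) (_ : Fintype A) (tail : A → T) (head : A → H),
      Nonempty T ∧ Fintype.card H = d * Fintype.card T ∧
      (∀ h, {a | head a = h}.ncard = k + 1) ∧ (∀ t, {a | tail a = t}.ncard = d * (k + 1)) ∧
      GirthAtLeast tail head (2 ^ n) := by
  classical
  induction n with
  | zero =>
    refine ⟨Unit, Fin d, Fin d × Fin (k + 1), inferInstance, inferInstance, inferInstance,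
      fun _ => (), Prod.fst, inferInstance, by simp, fun h => ?_, fun t => ?_, ?_⟩
    · have : {a : Fin d × Fin (k + 1) | a.1 = h} = Prod.mk h '' Set.univ := by
        ext ⟨a, b⟩
        simp [eq_comm]
      rw [this, Set.ncard_image_of_injective _ (Prod.mk_right_injective h)]
      simp
    · simp
    · intro f _ hf
      obtain ⟨a, ha⟩ := Function.ne_iff.1 hf
      exact (Set.ncard_pos (Set.toFinite _)).2 ⟨a, ha⟩
  | succ n ih =>
    obtain ⟨T, H, A, _, _, _, tail, head, hne, hcard, hin, hout, hg⟩ := ih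
    refine ⟨T × (A → ZMod 2), H × (A → ZMod 2), A × (A → ZMod 2), inferInstance, inferInstance,
      inferInstance, liftTail tail, liftHead head, inferInstance, ?_, ?_, ?_, ?_⟩
    · rw [Fintype.card_prod, Fintype.card_prod, hcard, mul_assoc]
    · rintro ⟨h, r⟩
      rw [← hin h]
      have : {a | liftHead head a = (h, r)} =
          (fun a => (a, r - Pi.single a 1)) '' {a | head a = h} := by
        ext ⟨a, s⟩
        simp only [liftHead, Set.mem_ofPred_eq, Prod.mk.injEq, Set.mem_image]
        constructor
        · rintro ⟨rfl, rfl⟩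
          exact ⟨a, rfl, rfl, by simp⟩
        · rintro ⟨b, rfl, rfl, rfl⟩
          simp
      rw [this, Set.ncard_image_of_injective]
      exact fun a b hab => congrArg Prod.fst hab
    · rintro ⟨t, s⟩
      rw [← hout t]
      have : {a | liftTail tail a = (t, s)} = (fun a => (a, s)) '' {a | tail a = t} := by
        ext ⟨a, r⟩
        simp only [liftTail, Set.mem_ofPred_eq, Prod.mk.injEq, Set.mem_image]
        constructor
        · rintro ⟨rfl, rfl⟩
          exact ⟨a, rfl, rfl, rfl⟩
        · rintro ⟨b, rfl, rfl, rfl⟩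
          simp
      rw [this, Set.ncard_image_of_injective]
      exact fun a b hab => congrArg Prod.fst hab
    · rw [pow_succ']
      exact hg.lift

/-- Bipartite multigraphs of large girth that are `(k + 1)`-regular on the head side, nearly
`d * (k + 1)`-regular on the tail side and have one head more than `d` times the number of tails. -/
theorem exists_nearly_biregular_girthAtLeast (k d n : ℕ) :
    ∃ (T H A : Type) (_ : Fintype T) (_ : Fintype H) (_ : Fintype A) (tail : A → T) (head : A → H),
      Fintype.card H = d * Fintype.card T + 1 ∧ (∀ h, {a | head a = h}.ncard = k + 1) ∧
      (∀ Y : Finset T, {a | tail a ∈ Y}.ncard ≤ d * (k + 1) * Y.card + (k + 1)) ∧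
      GirthAtLeast tail head (2 ^ n) := by
  classical
  obtain ⟨T, H, A, _, _, _, tail, head, ⟨t₀⟩, hcard, hin, hout, hg⟩ :=
    exists_biregular_girthAtLeast k d n
  let tail' : (Fin (k + 1) × A) ⊕ Fin (k + 1) → Fin (k + 1) × T :=
    Sum.elim (fun x => (x.1, tail x.2)) fun i => (i, t₀)
  let head' : (Fin (k + 1) × A) ⊕ Fin (k + 1) → Option (Fin (k + 1) × H) :=
    Sum.elim (fun x => some (x.1, head x.2)) fun _ => none
  refine ⟨Fin (k + 1) × T, Option (Fin (k + 1) × H), (Fin (k + 1) × A) ⊕ Fin (k + 1),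
    inferInstance, inferInstance, inferInstance, tail', head', ?_, ?_, ?_, ?_⟩
  · simp only [Fintype.card_option, Fintype.card_prod, hcard, Fintype.card_fin]
    ring
  · rintro (_ | ⟨i, h⟩)
    · have : {a | head' a = none} = Sum.inr '' Set.univ := by
        ext (a | a) <;> simp [head']
      rw [this, Set.ncard_image_of_injective _ Sum.inr_injective]
      simp
    · have : {a | head' a = some (i, h)} = (fun a => Sum.inl (i, a)) '' {a | head a = h} := by
        ext (⟨j, a⟩ | a) <;> simp [head']
        grind
      rw [this, Set.ncard_image_of_injective, hin h]
      intro a b hab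
      simpa using hab
  · intro Y
    have hsub : {a | tail' a ∈ Y} ⊆
        (⋃ y ∈ Y, (fun a => Sum.inl (y.1, a)) '' {a | tail a = y.2}) ∪ Sum.inr '' Set.univ := by
      rintro (⟨i, a⟩ | i) ha
      · left
        simp only [Set.mem_iUnion]
        exact ⟨(i, tail a), ha, a, rfl, rfl⟩
      · right
        simp
    refine (Set.ncard_le_ncard hsub (Set.toFinite _)).trans ((Set.ncard_union_le _ _).trans ?_)
    refine add_le_add ?_ ?_
    · refine (Finset.set_ncard_biUnion_le _ _).trans ?_
      rw [mul_comm, ← smul_eq_mul]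
      refine Finset.sum_le_card_nsmul _ _ _ fun y _ => ?_
      exact (Set.ncard_image_le (Set.toFinite _)).trans (hout y.2).le
    · refine (Set.ncard_image_le (Set.toFinite _)).trans ?_
      simp
  · intro f hf hf0
    have split : ∀ ψ : (Fin (k + 1) × A) ⊕ Fin (k + 1) → ZMod 2,
        ∑ a, ψ a * f a = ∑ i, ∑ a, ψ (Sum.inl (i, a)) * f (Sum.inl (i, a)) +
          ∑ i, ψ (Sum.inr i) * f (Sum.inr i) := by
      intro ψ
      rw [Fintype.sum_sum_type, Fintype.sum_prod_type]
    have hcopy : ∀ i, ∀ φ : H → ZMod 2, ∑ a, φ (head a) * f (Sum.inl (i, a)) = 0 := by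
      intro i φ
      have h := hf.2 fun x => x.elim 0 fun y => if y.1 = i then φ y.2 else 0
      rw [split fun a => (head' a).elim 0 fun y => if y.1 = i then φ y.2 else 0] at h
      rw [Finset.sum_eq_single i (fun j _ hj => by simp [head', hj]) (by simp)] at h
      simpa [head'] using h
    have hcopyT : ∀ i, ∀ φ : T → ZMod 2,
        ∑ a, φ (tail a) * f (Sum.inl (i, a)) + φ t₀ * f (Sum.inr i) = 0 := by
      intro i φ
      have h := hf.1 fun y => if y.1 = i then φ y.2 else 0
      rw [split fun a => if (tail' a).1 = i then φ (tail' a).2 else 0] at h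
      rw [Finset.sum_eq_single i (fun j _ hj => by simp [tail', hj]) (by simp),
        Finset.sum_eq_single i (fun j _ hj => by simp [tail', hj]) (by simp)] at h
      simpa [tail'] using h
    have hextra : ∀ i, f (Sum.inr i) = 0 := by
      intro i
      have h1 := hcopy i fun _ => 1
      have h2 := hcopyT i fun _ => 1
      rw [h1] at h2
      simpa using h2
    obtain ⟨x, hx⟩ := Function.ne_iff.1 hf0
    obtain ⟨i, a⟩ | i := x
    · have := hg (fun b => f (Sum.inl (i, b)))
        ⟨fun φ => by simpa [hextra] using hcopyT i φ, hcopy i⟩ (Function.ne_iff.2 ⟨a, hx⟩)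
      refine this.trans (Set.ncard_le_ncard_of_injOn (fun b => Sum.inl (i, b)) (fun b hb => hb) ?_)
      intro b _ c _ hbc
      simpa using hbc
    · exact absurd (hextra i) hx

/-- If a set of `k + 1` elements is covered by `k + 1` classes, each containing at most one of its
elements, then each class contains an element of the set. -/
theorem exists_mem_class_of_ncard_eq {A : Type} [Finite A] {k : ℕ} (S : Set A)
    (hS : S.ncard = k + 1) (B : Fin (k + 1) → Set A) (hB : (⋃ i, B i) = Set.univ)
    (hone : ∀ i, {a | a ∈ B i ∧ a ∈ S}.ncard ≤ 1) (i : Fin (k + 1)) : ∃ a ∈ B i, a ∈ S := by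
  classical
  have hmem : ∀ a, ∃ i, a ∈ B i := fun a => by
    have : a ∈ ⋃ i, B i := hB ▸ Set.mem_univ a
    simpa using this
  choose c hc using hmem
  have hinj : Set.InjOn c S := by
    intro a ha b hb hab
    exact (Set.ncard_le_one (Set.toFinite _)).1 (hone (c a)) a ⟨hc a, ha⟩ b ⟨hab ▸ hc b, hb⟩
  have himg : c '' S = Set.univ := by
    refine Set.eq_of_subset_of_ncard_le (Set.subset_univ _) ?_ (Set.toFinite _)
    rw [hinj.ncard_image, hS]
    simp
  obtain ⟨a, ha, hai⟩ : i ∈ c '' S := himg ▸ Set.mem_univ i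
  exact ⟨a, hai ▸ hc a, ha⟩

/-- sharpness of the fractional arboricity bound for the branching
version of the Nine Dragon Tree conjecture for digraphs. -/
theorem stmt2 (k d : ℕ) (hk : 0 < k) (hd : 0 < d) (ε : ℝ) (hε : 0 < ε) :
    ∃ (V A : Type) (_ : Fintype V) (_ : Fintype A) (tail head : A → V),
      (∀ a : A, tail a ≠ head a) ∧
      -- acyclic: no directed cycle
      (∀ v : V, ¬ Relation.TransGen (fun u w : V => ∃ a : A, tail a = u ∧ head a = w) v v) ∧
      -- underlying graph bipartite
      (∃ P : Set V, ∀ a : A,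
        (tail a ∈ P ∧ head a ∉ P) ∨ (tail a ∉ P ∧ head a ∈ P)) ∧
      -- max in-degree at most k+1
      (∀ v : V, {a : A | head a = v}.ncard ≤ k + 1) ∧
      -- fractional arboricity < k + (d-k)/(d+1) + ε
      (∀ X : Set V, 2 ≤ X.ncard →
        ({a : A | tail a ∈ X ∧ head a ∈ X}.ncard : ℝ)
          < ((k : ℝ) + ((d : ℝ) - (k : ℝ)) / ((d : ℝ) + 1) + ε) * ((X.ncard : ℝ) - 1)) ∧
      -- no decomposition into k+1 branchings the last of which has Δ⁺ ≤ d
      ¬ ∃ B : Fin (k + 1) → Set A,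
          (∀ i j, i ≠ j → Disjoint (B i) (B j)) ∧
          (⋃ i, B i) = Set.univ ∧
          (∀ i,
            (∀ v : V, {a : A | a ∈ B i ∧ head a = v}.ncard ≤ 1) ∧
            (∀ X : Set V, X.Nonempty →
              {a : A | a ∈ B i ∧ tail a ∈ X ∧ head a ∈ X}.ncard ≤ X.ncard - 1)) ∧
          (∀ v : V, {a : A | a ∈ B (Fin.last k) ∧ tail a = v}.ncard ≤ d) := by
  classical
  obtain ⟨n, hn⟩ := pow_unbounded_of_one_lt (((k : ℝ) + 1) * (((k : ℝ) + 1) / ε + 1))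
    (one_lt_two : (1 : ℝ) < 2)
  obtain ⟨T, H, A, _, _, _, tail, head, hcard, hin, hout, hg⟩ :=
    exists_nearly_biregular_girthAtLeast k d n
  refine ⟨T ⊕ H, A, inferInstance, inferInstance, fun a => Sum.inl (tail a),
    fun a => Sum.inr (head a), by simp, ?_, ⟨Set.range Sum.inl, fun a => by simp⟩, ?_, ?_, ?_⟩
  · intro v hv
    obtain ⟨_, _, a, _, ha⟩ := Relation.TransGen.tail'_iff.1 hv
    obtain ⟨_, ⟨b, hb, _⟩, _⟩ := Relation.TransGen.head'_iff.1 hv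
    exact Sum.inl_ne_inr (hb.trans ha.symm)
  · rintro (t | h)
    · simp
    · simp only [Sum.inr.injEq]
      exact (hin h).le
  · intro X hX
    set Φ : Finset A := Finset.univ.filter fun a => Sum.inl (tail a) ∈ X ∧ Sum.inr (head a) ∈ X
      with hΦ
    set T' : Finset T := Finset.univ.filter fun t => Sum.inl t ∈ X with hT'
    set H' : Finset H := Finset.univ.filter fun h => Sum.inr h ∈ X with hH'
    have hΦcard : {a : A | (Sum.inl (tail a) : T ⊕ H) ∈ X ∧ (Sum.inr (head a) : T ⊕ H) ∈ X}.ncard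
        = Φ.card := by
      rw [← Set.ncard_coe_finset]
      congr 1
      ext a
      simp [hΦ]
    have hXcard : X.ncard = T'.card + H'.card := by
      rw [← Finset.card_disjSum, ← Set.ncard_coe_finset]
      congr 1
      ext (x | x) <;> simp [hT', hH']
    have hT : ∀ a ∈ Φ, tail a ∈ T' := fun a ha => by
      simp only [hΦ, Finset.mem_filter] at ha
      simp [hT', ha.2.1]
    have hH : ∀ a ∈ Φ, head a ∈ H' := fun a ha => by
      simp only [hΦ, Finset.mem_filter] at ha
      simp [hH', ha.2.2]
    have hleT : Φ.card ≤ d * (k + 1) * T'.card + (k + 1) := by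
      refine le_trans ?_ (hout T')
      rw [← Set.ncard_coe_finset]
      exact Set.ncard_le_ncard (fun a ha => hT a ha) (Set.toFinite _)
    have hleH : Φ.card ≤ (k + 1) * H'.card := by
      refine Finset.card_le_mul_card_image_of_maps_to hH _ fun h _ => ?_
      rw [← hin h, ← Set.ncard_coe_finset]
      exact Set.ncard_le_ncard (fun a ha => by simpa using (Finset.mem_filter.1 ha).2)
        (Set.toFinite _)
    rw [hΦcard]
    set x : ℝ := (X.ncard : ℝ) with hx
    have hx2 : (2 : ℝ) ≤ x := by
      rw [hx]
      exact_mod_cast hX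
    have hk1 : (1 : ℝ) ≤ k := by exact_mod_cast hk
    have hd1 : (1 : ℝ) ≤ d := by exact_mod_cast hd
    set c : ℝ := (k : ℝ) + ((d : ℝ) - k) / ((d : ℝ) + 1) with hc
    have hcd : c * ((d : ℝ) + 1) = d * (k + 1) := by
      rw [hc]
      field_simp
      ring
    have hεx : 0 < ε * (x - 1) := mul_pos hε (by linarith)
    by_cases hsmall : Φ.card < X.ncard
    · have hc1 : 1 ≤ c := by nlinarith
      have : (Φ.card : ℝ) + 1 ≤ x := by
        rw [hx]
        exact_mod_cast hsmall
      nlinarith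
    · have hle : T'.card + H'.card ≤ Φ.card := by omega
      obtain ⟨f, hf, hf0, hfΦ⟩ := exists_isCycleFun_of_card_le tail head Φ T' H' hT hH
        (Finset.card_pos.1 (by omega)) hle
      have hgirth : 2 ^ n ≤ Φ.card := by
        refine (hg f hf hf0).trans ?_
        rw [← Set.ncard_coe_finset]
        exact Set.ncard_le_ncard (fun a ha => hfΦ a ha) (Set.toFinite _)
      have hgirth' : (2 : ℝ) ^ n ≤ Φ.card := by exact_mod_cast hgirth
      have hxsum : x = T'.card + H'.card := by rw [hx, hXcard]; push_cast; ring
      have hleT' : (Φ.card : ℝ) ≤ d * (k + 1) * T'.card + (k + 1) := by exact_mod_cast hleT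
      have hleH' : (Φ.card : ℝ) ≤ (k + 1) * H'.card := by exact_mod_cast hleH
      have hsum : (Φ.card : ℝ) * (d + 1) ≤ d * (k + 1) * x + (k + 1) := by
        rw [hxsum]
        nlinarith
      have hupper : (Φ.card : ℝ) ≤ c * (x - 1) + (k + 1) := by
        refine le_of_mul_le_mul_right ?_ (by linarith : (0 : ℝ) < (d : ℝ) + 1)
        calc (Φ.card : ℝ) * (d + 1) ≤ d * (k + 1) * x + (k + 1) := hsum
          _ = (c * ((d : ℝ) + 1)) * (x - 1) + (k + 1) * (d + 1) := by rw [hcd]; ring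
          _ = (c * (x - 1) + (k + 1)) * (d + 1) := by ring
      have hck : c ≤ k + 1 := by nlinarith
      have hkx : ((k : ℝ) + 1) * (((k : ℝ) + 1) / ε + 1) < (k + 1) * x := by nlinarith
      have hdiv : ((k : ℝ) + 1) / ε + 1 < x := lt_of_mul_lt_mul_left hkx (by linarith)
      have hfinal : (k : ℝ) + 1 < ε * (x - 1) := by
        rw [mul_comm]
        exact (div_lt_iff₀ hε).1 (by linarith)
      nlinarith
  · rintro ⟨B, -, hB, hbr, hdeg⟩
    have hex : ∀ h, ∃ a ∈ B (Fin.last k), a ∈ {a | head a = h} := fun h =>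
      exists_mem_class_of_ncard_eq _ (hin h) B hB
        (fun i => by simpa using (hbr i).1 (Sum.inr h)) _
    choose s hsB hs using hex
    have hle : Fintype.card H ≤ d * Fintype.card T := by
      refine Finset.card_le_mul_card_image_of_maps_to (f := fun h => tail (s h))
        (fun _ _ => Finset.mem_univ _) d fun t _ => ?_
      refine le_trans ?_ (hdeg (Sum.inl t))
      rw [← Set.ncard_coe_finset]
      refine Set.ncard_le_ncard_of_injOn s (fun h hh => ?_) ?_ (Set.toFinite _)
      · exact ⟨hsB h, congrArg Sum.inl (by simpa using hh)⟩
      · intro a _ b _ hab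
        rw [← show head (s a) = a from hs a, ← show head (s b) = b from hs b, hab]
    omega
end

section
/- Let D = (V, A) be a digraph, let T ⊆ V, and let f : V → ℕ. Suppose that for every nonempty X ⊆ T one has Σ_{v ∈ N⁻(X)} f(v) ≥ |X|. Then there exists a branching B ⊆ A such that (i) every v ∈ T has exactly one arc of B with head v, and (ii) every v ∈ V is the tail of at most f(v) arcs of B. -/
/-- The in-neighborhood of a vertex set `X`: vertices outside `X` that are the
tail of some arc with head in `X`. -/
def inNbr {V A : Type} (tail head : A → V) (X : Set V) : Set V :=
  {y : V | y ∉ X ∧ ∃ a : A, tail a = y ∧ head a ∈ X}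

open scoped Classical in
/-- The in-neighborhood of a finite vertex set, as a finite set. -/
noncomputable def inNbrFinset {V A : Type} [Fintype V] (tail head : A → V) (X : Finset V) :
    Finset V :=
  Finset.univ.filter fun y => y ∉ X ∧ ∃ a : A, tail a = y ∧ head a ∈ X

section

variable {V A : Type} [Fintype V] {tail head : A → V}

theorem mem_inNbrFinset {X : Finset V} {y : V} :
    y ∈ inNbrFinset tail head X ↔ y ∉ X ∧ ∃ a : A, tail a = y ∧ head a ∈ X := by
  simp [inNbrFinset]

/-- Submodularity of the weighted in-neighborhood, with the gain from the common in-neighbors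
that are not in-neighbors of the intersection. -/
theorem sum_inNbrFinset_union_add_inter_add_le [DecidableEq V] (f : V → ℕ) (X Y : Finset V) :
    ∑ v ∈ inNbrFinset tail head (X ∪ Y), f v + ∑ v ∈ inNbrFinset tail head (X ∩ Y), f v +
        ∑ v ∈ (inNbrFinset tail head X ∩ inNbrFinset tail head Y) \
          inNbrFinset tail head (X ∩ Y), f v ≤
      ∑ v ∈ inNbrFinset tail head X, f v + ∑ v ∈ inNbrFinset tail head Y, f v := by
  have hunion : inNbrFinset tail head (X ∪ Y) ∪ inNbrFinset tail head (X ∩ Y) ⊆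
      inNbrFinset tail head X ∪ inNbrFinset tail head Y := by
    intro y
    simp only [Finset.mem_union, mem_inNbrFinset, Finset.mem_inter]
    grind
  have hinter : inNbrFinset tail head (X ∪ Y) ∩ inNbrFinset tail head (X ∩ Y) ⊆
      (inNbrFinset tail head X ∩ inNbrFinset tail head Y) ∩
        inNbrFinset tail head (X ∩ Y) := by
    intro y
    simp only [Finset.mem_union, mem_inNbrFinset, Finset.mem_inter]
    grind
  rw [← Finset.sum_union_inter, ← Finset.sum_union_inter (s₁ := inNbrFinset tail head X),
    ← Finset.sum_inter_add_sum_sdiff (inNbrFinset tail head X ∩ inNbrFinset tail head Y)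
      (inNbrFinset tail head (X ∩ Y)), add_assoc]
  have h₁ := Finset.sum_le_sum_of_subset (f := f) hunion
  have h₂ := Finset.sum_le_sum_of_subset (f := f) hinter
  omega

/-- Some arc leaving `r` has its head in every tight subset of `T` with in-neighbor `r`. -/
theorem exists_arc_head_mem_of_tight {T : Finset V} {f : V → ℕ}
    (hcond : ∀ X ⊆ T, X.card ≤ ∑ v ∈ inNbrFinset tail head X, f v)
    {r : V} (hr : r ∈ inNbrFinset tail head T) (hfr : 0 < f r) :
    ∃ a : A, tail a = r ∧ head a ∈ T ∧ ∀ Y ⊆ T, r ∈ inNbrFinset tail head Y →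
      ∑ v ∈ inNbrFinset tail head Y, f v ≤ Y.card → head a ∈ Y := by
  classical
  let S := T.powerset.filter fun X => r ∈ inNbrFinset tail head X ∧
    ∑ v ∈ inNbrFinset tail head X, f v ≤ X.card
  rcases S.eq_empty_or_nonempty with hS | hS
  · obtain ⟨-, a, har, haT⟩ := mem_inNbrFinset.1 hr
    refine ⟨a, har, haT, fun Y hYT hrY hY => ?_⟩
    have : Y ∈ S := by simp [S, hYT, hrY, hY]
    simp [hS] at this
  · obtain ⟨X, hXS, hmin⟩ := S.exists_min_image Finset.card hS
    obtain ⟨hXT, hrX, hX⟩ : X ⊆ T ∧ r ∈ inNbrFinset tail head X ∧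
        ∑ v ∈ inNbrFinset tail head X, f v ≤ X.card := by simpa [S] using hXS
    obtain ⟨-, a, har, haX⟩ := mem_inNbrFinset.1 hrX
    refine ⟨a, har, hXT haX, fun Y hYT hrY hY => ?_⟩
    have hcard := Finset.card_union_add_card_inter X Y
    have hunion := hcond _ (Finset.union_subset hXT hYT)
    have hinterT : X ∩ Y ⊆ T := Finset.inter_subset_left.trans hXT
    have hinter := hcond _ hinterT
    have hsub := sum_inNbrFinset_union_add_inter_add_le (tail := tail) (head := head) f X Y
    have hrXY : r ∈ inNbrFinset tail head (X ∩ Y) := by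
      by_contra hrXY
      have := Finset.single_le_sum_of_canonicallyOrdered (f := f)
        (Finset.mem_sdiff.2 ⟨Finset.mem_inter.2 ⟨hrX, hrY⟩, hrXY⟩)
      omega
    have hle : ∑ v ∈ inNbrFinset tail head (X ∩ Y), f v ≤ (X ∩ Y).card := by omega
    have hXY : X ∩ Y = X := Finset.eq_of_subset_of_card_le Finset.inter_subset_left
      (hmin _ (by simp [S, hinterT, hrXY, hle]))
    exact Finset.inter_eq_left.1 hXY haX

/-- Finset form of the existence of a branching covering exactly `T`. -/
theorem exists_finset_branching [DecidableEq V] (T : Finset V) (f : V → ℕ)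
    (hcond : ∀ X ⊆ T, X.card ≤ ∑ v ∈ inNbrFinset tail head X, f v) :
    ∃ B : Finset A,
      (∀ a ∈ B, head a ∈ T) ∧
      (∀ v ∈ T, (B.filter fun a => head a = v).card = 1) ∧
      (∀ X : Finset V, X.Nonempty →
        (B.filter fun a => tail a ∈ X ∧ head a ∈ X).card + 1 ≤ X.card) ∧
      (∀ v, (B.filter fun a => tail a = v).card ≤ f v) := by
  classical
  induction hn : T.card generalizing T f with
  | zero =>
    obtain rfl := Finset.card_eq_zero.1 hn
    exact ⟨∅, by simp, by simp, fun X hX => by simpa using hX, by simp⟩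
  | succ n ih =>
    obtain ⟨r, hr, hfr⟩ : ∃ r ∈ inNbrFinset tail head T, 0 < f r := by
      have hpos := hcond T subset_rfl
      by_contra! hzero
      rw [Finset.sum_eq_zero fun v hv => Nat.le_zero.1 (hzero v hv)] at hpos
      omega
    obtain ⟨a, rfl, haT, ha⟩ := exists_arc_head_mem_of_tight hcond hr hfr
    have hrT : tail a ∉ T := (mem_inNbrFinset.1 hr).1
    obtain ⟨B, hBT, hBin, hBX, hBf⟩ := ih (T.erase (head a))
      (Function.update f (tail a) (f (tail a) - 1)) (by
        intro X hX
        have hXT : X ⊆ T := hX.trans (Finset.erase_subset _ _)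
        by_cases hrX : tail a ∈ inNbrFinset tail head X
        · have hlt : X.card < ∑ v ∈ inNbrFinset tail head X, f v := by
            by_contra! hle
            exact (Finset.mem_erase.1 (hX (ha X hXT hrX hle))).1 rfl
          rw [← Finset.add_sum_erase _ _ hrX] at hlt
          rw [Finset.sum_update_of_mem hrX, Finset.sdiff_singleton_eq_erase]
          omega
        · rw [Finset.sum_update_of_notMem hrX]
          exact hcond X hXT)
      (by rw [Finset.card_erase_of_mem haT]; omega)
    have haB : a ∉ B := fun h => (Finset.mem_erase.1 (hBT a h)).1 rfl
    refine ⟨insert a B, ?_, ?_, ?_, ?_⟩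
    · intro b hb
      rcases Finset.mem_insert.1 hb with rfl | hb
      · exact haT
      · exact Finset.mem_of_mem_erase (hBT b hb)
    · intro v hv
      rw [Finset.filter_insert]
      split_ifs with h
      · have : B.filter (fun b => head b = v) = ∅ :=
          Finset.filter_eq_empty_iff.2 fun b hb hbv =>
            (Finset.mem_erase.1 (hBT b hb)).1 (hbv.trans h.symm)
        simp [this]
      · exact hBin v (Finset.mem_erase.2 ⟨Ne.symm h, hv⟩)
    · intro X hX
      rw [Finset.filter_insert]
      split_ifs with h
      · rw [Finset.card_insert_of_notMem fun h => haB (Finset.mem_filter.1 h).1]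
        have hne : tail a ≠ head a := fun h => hrT (h ▸ haT)
        have hle : (B.filter fun b => tail b ∈ X ∧ head b ∈ X).card ≤
            ((X.erase (head a)).erase (tail a)).card := by
          refine Finset.card_le_card_of_injOn head ?_ ?_
          · intro b hb
            obtain ⟨hbB, -, hbX⟩ := Finset.mem_filter.1 hb
            obtain ⟨hba, hbT⟩ := Finset.mem_erase.1 (hBT b hbB)
            exact Finset.mem_coe.2 (Finset.mem_erase.2
              ⟨fun h => hrT (h ▸ hbT), Finset.mem_erase.2 ⟨hba, hbX⟩⟩)
          · intro b hb c hc hbc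
            have hbB := (Finset.mem_filter.1 hb).1
            have hcB := (Finset.mem_filter.1 hc).1
            exact Finset.card_le_one.1 (hBin _ (hBT b hbB)).le b (by simp [hbB]) c
              (by simp [hcB, hbc])
        have hta : tail a ∈ X.erase (head a) := Finset.mem_erase.2 ⟨hne, h.1⟩
        have h₁ := Finset.card_erase_add_one hta
        have h₂ := Finset.card_erase_add_one h.2
        omega
      · exact hBX X hX
    · intro v
      have hv := hBf v
      rw [Finset.filter_insert]
      split_ifs with h
      · subst h
        rw [Function.update_self] at hv
        rw [Finset.card_insert_of_notMem fun h => haB (Finset.mem_filter.1 h).1]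
        omega
      · rwa [Function.update_of_ne (Ne.symm h)] at hv

end

/-- if `Σ_{v ∈ N⁻(X)} f(v) ≥ |X|` for all nonempty `X ⊆ T`, then
there is a branching with in-degree exactly `1` at every vertex of `T` and
out-degree at most `f(v)` at every vertex `v`. -/
theorem stmt3 {V A : Type} [Fintype V] [Fintype A]
    (tail head : A → V) (hloop : ∀ a : A, tail a ≠ head a)
    (T : Set V) (f : V → ℕ)
    (hcond : ∀ X : Set V, X ⊆ T → X.Nonempty →
      X.ncard ≤ ∑ᶠ v ∈ inNbr tail head X, f v) :
    ∃ B : Set A,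
      (∀ v : V, {a : A | a ∈ B ∧ head a = v}.ncard ≤ 1) ∧
      (∀ X : Set V, X.Nonempty →
        {a : A | a ∈ B ∧ tail a ∈ X ∧ head a ∈ X}.ncard ≤ X.ncard - 1) ∧
      (∀ v ∈ T, {a : A | a ∈ B ∧ head a = v}.ncard = 1) ∧
      (∀ v : V, {a : A | a ∈ B ∧ tail a = v}.ncard ≤ f v) := by
  classical
  obtain ⟨B, hBT, hBin, hBX, hBf⟩ := exists_finset_branching (tail := tail) (head := head)
    T.toFinset f (by
      intro X hX
      rcases X.eq_empty_or_nonempty with rfl | hne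
      · simp
      · have h := hcond X (fun v hv => by simpa using hX hv) (by simpa using hne)
        have hN : inNbr tail head (X : Set V) = (inNbrFinset tail head X : Set V) := by
          ext y
          simp [inNbr, mem_inNbrFinset]
        rwa [hN, finsum_mem_coe_finset, Set.ncard_coe_finset] at h)
  have hcard (p : A → Prop) : {a : A | a ∈ (B : Set A) ∧ p a}.ncard = (B.filter p).card := by
    rw [← Set.ncard_coe_finset]
    simp
  refine ⟨B, fun v => ?_, fun X hX => ?_, fun v hv => ?_, fun v => ?_⟩
  · rw [hcard]
    by_cases hv : v ∈ T
    · exact (hBin v (by simpa using hv)).le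
    · rw [Finset.filter_eq_empty_iff.2 fun a ha h => hv (by simpa [h] using hBT a ha)]
      simp
  · rw [hcard, Set.ncard_eq_toFinset_card']
    have h := hBX X.toFinset (by simpa using hX)
    simp only [Set.mem_toFinset] at h
    convert Nat.le_sub_of_add_le h
  · rw [hcard]
    exact hBin v (by simpa using hv)
  · rw [hcard]
    exact hBf v
end

section
/- Let D = (V, A) be a digraph, T ⊆ V, f : V → ℕ, and let s₀ ∈ V ∖ T with f(s₀) > 0. Suppose that for every nonempty X ⊆ T one has Σ_{v ∈ N⁻(X)} f(v) ≥ |X|. Define ℰ = {X ⊆ T : s₀ ∈ N⁻(X) and Σ_{v ∈ N⁻(X)} f(v) = |X|}. Then ℰ is closed under intersection: if X₁ ∈ ℰ and X₂ ∈ ℰ, then X₁ ∩ X₂ ∈ ℰ (in particular X₁ ∩ X₂ ≠ ∅). -/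
/-- Pointwise form of the submodularity of the in-neighborhood. -/
theorem indicator_inNbr_union_add_inter_le {V A : Type} (tail head : A → V)
    (f : V → ℕ) (X Y : Set V) (v : V) :
    (inNbr tail head (X ∪ Y)).indicator f v + (inNbr tail head (X ∩ Y)).indicator f v ≤
      (inNbr tail head X).indicator f v + (inNbr tail head Y).indicator f v := by
  classical
  have hboth : v ∈ inNbr tail head (X ∪ Y) → v ∈ inNbr tail head (X ∩ Y) →
      v ∈ inNbr tail head X ∧ v ∈ inNbr tail head Y := by
    rintro ⟨hv, -⟩ ⟨-, a, ha, haX, haY⟩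
    exact ⟨⟨fun h => hv (Or.inl h), a, ha, haX⟩, ⟨fun h => hv (Or.inr h), a, ha, haY⟩⟩
  have hunion : v ∈ inNbr tail head (X ∪ Y) →
      v ∈ inNbr tail head X ∨ v ∈ inNbr tail head Y := by
    rintro ⟨hv, a, ha, haX | haY⟩
    · exact Or.inl ⟨fun h => hv (Or.inl h), a, ha, haX⟩
    · exact Or.inr ⟨fun h => hv (Or.inr h), a, ha, haY⟩
  have hinter : v ∈ inNbr tail head (X ∩ Y) →
      v ∈ inNbr tail head X ∨ v ∈ inNbr tail head Y := by
    rintro ⟨hv, a, ha, haX, haY⟩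
    by_cases hvX : v ∈ X
    · exact Or.inr ⟨fun h => hv ⟨hvX, h⟩, a, ha, haY⟩
    · exact Or.inl ⟨hvX, a, ha, haX⟩
  simp only [Set.indicator_apply]
  grind

theorem finsum_mem_eq_sum_indicator {V : Type} [Fintype V] (f : V → ℕ) (S : Set V) :
    ∑ᶠ v ∈ S, f v = ∑ v, S.indicator f v := by
  rw [finsum_mem_def, finsum_eq_sum_of_fintype]

/-- the family `ℰ = {X ⊆ T : s₀ ∈ N⁻(X), Σ_{v ∈ N⁻(X)} f(v) = |X|}`
is closed under intersection (in particular intersections are nonempty). -/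
theorem stmt5 {V A : Type} [Fintype V] [Fintype A]
    (tail head : A → V) (hloop : ∀ a : A, tail a ≠ head a)
    (T : Set V) (f : V → ℕ) (s₀ : V) (hs₀T : s₀ ∈ Set.univ \ T) (hf : 0 < f s₀)
    (hcond : ∀ X : Set V, X ⊆ T → X.Nonempty →
      X.ncard ≤ ∑ᶠ v ∈ inNbr tail head X, f v)
    (X₁ X₂ : Set V) (h₁ : X₁ ⊆ T) (h₂ : X₂ ⊆ T)
    (hs₁ : s₀ ∈ inNbr tail head X₁)
    (he₁ : ∑ᶠ v ∈ inNbr tail head X₁, f v = X₁.ncard)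
    (hs₂ : s₀ ∈ inNbr tail head X₂)
    (he₂ : ∑ᶠ v ∈ inNbr tail head X₂, f v = X₂.ncard) :
    s₀ ∈ inNbr tail head (X₁ ∩ X₂) ∧
    (∑ᶠ v ∈ inNbr tail head (X₁ ∩ X₂), f v = (X₁ ∩ X₂).ncard) ∧
    (X₁ ∩ X₂).Nonempty := by
  have hcond' : ∀ X : Set V, X ⊆ T → X.ncard ≤ ∑ᶠ v ∈ inNbr tail head X, f v := by
    intro X hX
    rcases X.eq_empty_or_nonempty with rfl | hne
    · simp
    · exact hcond X hX hne
  have hunion := hcond' (X₁ ∪ X₂) (Set.union_subset h₁ h₂)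
  have hinter := hcond' (X₁ ∩ X₂) (Set.inter_subset_left.trans h₁)
  have hcard := Set.ncard_union_add_ncard_inter X₁ X₂
  have hle := indicator_inNbr_union_add_inter_le tail head f X₁ X₂
  have hsum := Finset.sum_le_sum fun v (_ : v ∈ Finset.univ) => hle v
  simp only [finsum_mem_eq_sum_indicator] at he₁ he₂ hunion hinter ⊢
  have hs : s₀ ∈ inNbr tail head (X₁ ∩ X₂) := by
    by_contra hs
    have hlt := Finset.sum_lt_sum (fun v (_ : v ∈ Finset.univ) => hle v)
      ⟨s₀, Finset.mem_univ _, by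
        have : (inNbr tail head (X₁ ∪ X₂)).indicator f s₀ ≤ f s₀ :=
          Set.indicator_le_self _ f s₀
        rw [Set.indicator_of_notMem hs, Set.indicator_of_mem hs₁, Set.indicator_of_mem hs₂]
        omega⟩
    simp only [Finset.sum_add_distrib] at hlt
    omega
  simp only [Finset.sum_add_distrib] at hsum
  obtain ⟨-, a, -, ha⟩ := id hs
  exact ⟨hs, by omega, head a, ha⟩
end

section
/- Let k and d be positive integers, let D = (V, A) be a digraph, and let v ∈ V be a vertex whose in-degree satisfies 1 ≤ d⁻(v) ≤ k. Let A_v ⊆ A be the set of arcs with head v. If A ∖ A_v can be partitioned into k+1 pseudo-branchings C′₁, …, C′_k, C′_{k+1} with Δ⁺(C′_{k+1}) ≤ d, then A can be partitioned into k+1 pseudo-branchings C₁, …, C_k, C_{k+1} with Δ⁺(C_{k+1}) ≤ d. -/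
/-- if `v` has in-degree between `1` and `k`, and `A ∖ A_v`
(the arcs not heading into `v`) decomposes into `k+1` pseudo-branchings with the
last one of out-degree at most `d`, then so does the whole arc set `A`. -/
theorem stmt6 {V A : Type} [Fintype V] [Fintype A]
    (tail head : A → V) (hloop : ∀ a : A, tail a ≠ head a)
    (k d : ℕ) (hk : 0 < k) (hd : 0 < d)
    (v : V) (h1 : 1 ≤ {a : A | head a = v}.ncard) (h2 : {a : A | head a = v}.ncard ≤ k)
    (C' : Fin (k + 1) → Set A)
    (hdisj : ∀ i j, i ≠ j → Disjoint (C' i) (C' j))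
    (hcover : (⋃ i, C' i) = {a : A | head a ≠ v})
    (hpb : ∀ i, ∀ w : V, {a : A | a ∈ C' i ∧ head a = w}.ncard ≤ 1)
    (hout : ∀ w : V, {a : A | a ∈ C' (Fin.last k) ∧ tail a = w}.ncard ≤ d) :
    ∃ C : Fin (k + 1) → Set A,
      (∀ i j, i ≠ j → Disjoint (C i) (C j)) ∧
      (⋃ i, C i) = Set.univ ∧
      (∀ i, ∀ w : V, {a : A | a ∈ C i ∧ head a = w}.ncard ≤ 1) ∧
      (∀ w : V, {a : A | a ∈ C (Fin.last k) ∧ tail a = w}.ncard ≤ d) := by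
  classical
  obtain ⟨f⟩ : Nonempty ({a : A | head a = v} ↪ Fin k) := by
    apply Function.Embedding.nonempty_of_card_le
    rwa [Fintype.card_fin, ← Nat.card_eq_fintype_card, Nat.card_coe_set_eq]
  have hC' : ∀ i, ∀ a ∈ C' i, head a ≠ v := fun i a ha =>
    hcover.subset (Set.mem_iUnion.2 ⟨i, ha⟩)
  refine ⟨fun i => C' i ∪ {a | ∃ h : head a = v, (f ⟨a, h⟩).castSucc = i}, ?_, ?_, ?_, ?_⟩
  · intro i j hij
    rw [Set.disjoint_left]
    rintro a (ha | ⟨h, rfl⟩) (hb | ⟨h', hb⟩)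
    · exact Set.disjoint_left.1 (hdisj i j hij) ha hb
    · exact hC' i a ha h'
    · exact hC' j a hb h
    · exact hij hb
  · refine Set.eq_univ_of_forall fun a => Set.mem_iUnion.2 ?_
    by_cases h : head a = v
    · exact ⟨_, Or.inr ⟨h, rfl⟩⟩
    · obtain ⟨i, hi⟩ := Set.mem_iUnion.1 (hcover.superset h)
      exact ⟨i, Or.inl hi⟩
  · intro i w
    rw [Set.ncard_le_one]
    rintro a ⟨ha | ⟨h, ha⟩, haw⟩ b ⟨hb | ⟨h', hb⟩, hbw⟩
    · exact (Set.ncard_le_one (Set.toFinite _)).1 (hpb i w) a ⟨ha, haw⟩ b ⟨hb, hbw⟩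
    · exact absurd (haw.trans (hbw.symm.trans h')) (hC' i a ha)
    · exact absurd (hbw.trans (haw.symm.trans h)) (hC' i b hb)
    · exact congrArg Subtype.val (f.injective (Fin.castSucc_injective k (ha.trans hb.symm)))
  · intro w
    refine (Set.ncard_le_ncard ?_ (Set.toFinite _)).trans (hout w)
    rintro a ⟨ha | ⟨h, ha⟩, haw⟩
    · exact ⟨ha, haw⟩
    · exact absurd ha (Fin.castSucc_ne_last _)
end

section
/- Let n, k, d be positive integers with n ≥ k+1, and let D₀ be the digraph defined in the context. If the arc set of D₀ is partitioned into k+1 branchings B′₁, …, B′_k, B′_{k+1} with Δ⁺(B′_{k+1}) ≤ d, then for every u ∈ U, the number of arcs of B′_{k+1} with tail u is exactly d. -/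
/-- Tail map of the digraph `D₀`: the arc `(i, j, t)` has tail `u_{i+j}`. -/
def tail0 (n k d : ℕ) : ZMod n × Fin (k + 1) × Fin d → ZMod n ⊕ ZMod n × Fin d :=
  fun a => Sum.inl (a.1 + (a.2.1.val : ZMod n))

/-- Head map of the digraph `D₀`: the arc `(i, j, t)` has head `(i, t) ∈ W_i`. -/
def head0 (n k d : ℕ) : ZMod n × Fin (k + 1) × Fin d → ZMod n ⊕ ZMod n × Fin d :=
  fun a => Sum.inr (a.1, a.2.2)

/-- If every in-degree in each of the `k + 1` classes covering `D₀` is at most one, then every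
vertex of `W` is the head of an arc in each class. -/
theorem exists_arc_mem_of_cover {n k d : ℕ} [NeZero n]
    (B : Fin (k + 1) → Set (ZMod n × Fin (k + 1) × Fin d))
    (hcover : (⋃ i, B i) = Set.univ)
    (hin : ∀ i, ∀ v : ZMod n ⊕ ZMod n × Fin d,
      {a : ZMod n × Fin (k + 1) × Fin d | a ∈ B i ∧ head0 n k d a = v}.ncard ≤ 1)
    (c : Fin (k + 1)) (i : ZMod n) (t : Fin d) : ∃ j, (i, j, t) ∈ B c := by
  have hmem : ∀ j : Fin (k + 1), ∃ b, (i, j, t) ∈ B b := fun j =>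
    Set.mem_iUnion.1 (hcover ▸ Set.mem_univ (i, j, t))
  choose f hf using hmem
  have hinj : Function.Injective f := by
    intro j j' h
    have hj' : (i, j', t) ∈ B (f j) := h ▸ hf j'
    have := (Set.ncard_le_one (Set.toFinite _)).1 (hin (f j) (Sum.inr (i, t)))
      (i, j, t) ⟨hf j, rfl⟩ (i, j', t) ⟨hj', rfl⟩
    simpa using this
  obtain ⟨j, rfl⟩ := Finite.surjective_of_injective hinj c
  exact ⟨j, hf j⟩

/-- in any decomposition of `D₀` into `k+1` branchings with the
last one of out-degree at most `d`, every vertex `u ∈ U` has out-degree exactly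
`d` in the last branching. -/
theorem stmt8 (n k d : ℕ) (hk : 0 < k) (hd : 0 < d) (hnk : k + 1 ≤ n)
    (B : Fin (k + 1) → Set (ZMod n × Fin (k + 1) × Fin d))
    (hdisj : ∀ i j, i ≠ j → Disjoint (B i) (B j))
    (hcover : (⋃ i, B i) = Set.univ)
    (hbr : ∀ i,
      (∀ v : ZMod n ⊕ ZMod n × Fin d,
        {a : ZMod n × Fin (k + 1) × Fin d | a ∈ B i ∧ head0 n k d a = v}.ncard ≤ 1) ∧
      (∀ X : Set (ZMod n ⊕ ZMod n × Fin d), X.Nonempty →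
        {a : ZMod n × Fin (k + 1) × Fin d |
          a ∈ B i ∧ tail0 n k d a ∈ X ∧ head0 n k d a ∈ X}.ncard ≤ X.ncard - 1))
    (hout : ∀ v : ZMod n ⊕ ZMod n × Fin d,
      {a : ZMod n × Fin (k + 1) × Fin d |
        a ∈ B (Fin.last k) ∧ tail0 n k d a = v}.ncard ≤ d) :
    ∀ u : ZMod n,
      {a : ZMod n × Fin (k + 1) × Fin d |
        a ∈ B (Fin.last k) ∧ tail0 n k d a = Sum.inl u}.ncard = d := by
  classical
  have : NeZero n := ⟨by omega⟩
  set L : Finset (ZMod n × Fin (k + 1) × Fin d) := {a | a ∈ B (Fin.last k)} with hL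
  have hcard : ∀ u : ZMod n,
      {a : ZMod n × Fin (k + 1) × Fin d |
        a ∈ B (Fin.last k) ∧ tail0 n k d a = Sum.inl u}.ncard =
      (L.filter fun a => a.1 + (a.2.1.val : ZMod n) = u).card := by
    intro u
    rw [← Set.ncard_coe_finset]
    congr 1
    ext a
    simp [hL, tail0]
  have hsum : ∑ u : ZMod n, (L.filter fun a => a.1 + (a.2.1.val : ZMod n) = u).card = L.card :=
    (Finset.card_eq_sum_card_fiberwise fun _ _ => Finset.mem_coe.2 (Finset.mem_univ _)).symm
  have hLcard : n * d ≤ L.card := by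
    choose g hg using exists_arc_mem_of_cover B hcover (fun i => (hbr i).1) (Fin.last k)
    have hle : (Finset.univ : Finset (ZMod n × Fin d)).card ≤ L.card :=
      Finset.card_le_card_of_injOn (fun p => (p.1, g p.1 p.2, p.2))
        (fun p _ => by simp [hL, hg]) (fun p _ q _ h => by
          simp only [Prod.mk.injEq] at h
          exact Prod.ext h.1 h.2.2)
    simpa [ZMod.card] using hle
  have hle : ∀ u ∈ (Finset.univ : Finset (ZMod n)),
      (L.filter fun a => a.1 + (a.2.1.val : ZMod n) = u).card ≤ d := fun u _ =>
    hcard u ▸ hout (Sum.inl u)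
  have heq : ∑ u : ZMod n, (L.filter fun a => a.1 + (a.2.1.val : ZMod n) = u).card =
      ∑ _u : ZMod n, d := by
    refine le_antisymm (Finset.sum_le_sum hle) ?_
    rw [hsum]
    simpa [ZMod.card] using hLcard
  intro u
  rw [hcard u]
  exact (Finset.sum_eq_sum_iff_of_le hle).1 heq u (Finset.mem_univ u)
end

section
/- Let n, k, d be positive integers with n ≥ k+1, and let D₀ be the digraph defined in the context. Then the fractional arboricity of D₀ equals d(k+1)n / ((d+1)n − 1); that is, for every X ⊆ V(D₀) with |X| ≥ 2, ((d+1)n − 1)·|A[X]| ≤ d(k+1)n·(|X|−1), and equality holds for X = V(D₀) (which has (d+1)n vertices and d(k+1)n arcs). -/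
open Finset

/-- A nonempty proper subset of a finite cyclic group contains an element whose successor lies
outside of it. -/
lemma exists_mem_add_one_notMem {n : ℕ} [NeZero n] (P : Finset (ZMod n)) (hne : P.Nonempty)
    (huniv : P ≠ univ) : ∃ a ∈ P, a + 1 ∉ P := by
  by_contra! hclosed
  obtain ⟨p, hp⟩ := hne
  have hadd (m : ℕ) : p + (m : ZMod n) ∈ P := by
    induction m with
    | zero => simpa using hp
    | succ m ih => simpa [add_assoc] using hclosed _ ih
  refine huniv (eq_univ_iff_forall.2 fun x => ?_)
  simpa using hadd (x - p).val

/-- Translates of a cyclic window of length `K` that meet both a nonempty proper subset `P` and its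
complement: there are at least `K` of them. -/
lemma le_card_mixed_windows {n K : ℕ} [NeZero n] (hK : 2 ≤ K) (hKn : K ≤ n)
    (P : Finset (ZMod n)) (hne : P.Nonempty) (huniv : P ≠ univ) :
    K ≤ #{i : ZMod n | (∃ j : Fin K, i + (j.val : ZMod n) ∈ P) ∧
      ∃ j : Fin K, i + (j.val : ZMod n) ∉ P} := by
  obtain ⟨a, ha, ha1⟩ := exists_mem_add_one_notMem P hne huniv
  have hreturn : ∃ t : ℕ, 1 ≤ t ∧ a + (t : ZMod n) ∈ P := ⟨n, by omega, by simpa using ha⟩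
  classical
  obtain ⟨ht1, htP⟩ := Nat.find_spec hreturn
  have htmin (s : ℕ) (hs : s < Nat.find hreturn) (hs1 : 1 ≤ s) : a + (s : ZMod n) ∉ P :=
    fun h => Nat.find_min hreturn hs ⟨hs1, h⟩
  have htn : Nat.find hreturn ≤ n := Nat.find_min' hreturn ⟨by omega, by simpa using ha⟩
  generalize Nat.find hreturn = t at *
  have ht2 : t ≠ 1 := by
    rintro rfl
    exact ha1 (by simpa using htP)
  set u := min (t - 1) (n - K + 1) with hu
  have hcard : #(insert u (Icc (n - K + 2) n)) = K := by
    rw [card_insert_of_notMem (by simp; omega), Nat.card_Icc]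
    omega
  rw [← hcard]
  refine card_le_card_of_injOn (fun s : ℕ => a + (s : ZMod n)) ?_ ?_
  · intro s hs
    have hoffset (v w : ℕ) : a + (v : ZMod n) + (w : ZMod n) = a + ((v + w : ℕ) : ZMod n) := by
      push_cast
      ring
    simp only [coe_insert, coe_Icc, Set.mem_insert_iff, Set.mem_Icc] at hs
    simp only [coe_filter, mem_univ, true_and, Set.mem_ofPred_eq, hoffset]
    rcases hs with rfl | ⟨hs1, hs2⟩
    · refine ⟨⟨⟨t - u, by omega⟩, ?_⟩, ⟨⟨0, by omega⟩, htmin _ (by simp; omega) (by simp; omega)⟩⟩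
      rwa [show u + (t - u) = t by omega]
    · refine ⟨⟨⟨n - s, by omega⟩, ?_⟩, ⟨⟨n - s + 1, by omega⟩, ?_⟩⟩
      · rw [show s + (n - s) = n by omega]
        simpa using ha
      · rw [show s + (n - s + 1) = n + 1 by omega]
        simpa using ha1
  · intro s hs s' hs' h
    simp only [coe_insert, coe_Icc, Set.mem_insert_iff, Set.mem_Icc] at hs hs'
    have hmod : s ≡ s' [MOD n] := (ZMod.natCast_eq_natCast_iff _ _ _).1 (add_left_cancel h)
    have hdvd : (n : ℤ) ∣ (s' : ℤ) - s := hmod.dvd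
    have := Int.eq_zero_of_abs_lt_dvd hdvd (by rw [abs_lt]; omega)
    omega

/-- The degrees into `P` of all windows of length `K` sum up to `K * #P`. -/
lemma sum_card_window {n : ℕ} [NeZero n] (K : ℕ) (P : Finset (ZMod n)) :
    ∑ i : ZMod n, #{j : Fin K | i + (j.val : ZMod n) ∈ P} = K * #P := by
  simp_rw [card_filter]
  rw [sum_comm]
  have hshift (j : Fin K) : (∑ i : ZMod n, if i + (j.val : ZMod n) ∈ P then 1 else 0) = #P := by
    refine (Equiv.sum_comp (Equiv.addRight (j.val : ZMod n))
      fun i => if i ∈ P then 1 else 0).trans ?_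
    simp
  simp [hshift]

/-- Weighted contribution of one class `W_i`, where `x` is the degree of its vertices and `q` the
number of its chosen vertices. -/
lemma class_bound {n K d x q : ℤ} (hn : 1 ≤ n) (hd : 1 ≤ d) (hx : 0 ≤ x) (hxK : x ≤ K)
    (hq : 0 ≤ q) (hqd : q ≤ d) :
    ((d + 1) * n - 1) * (q * x) + (if 0 < x ∧ x < K then d * (n - 1) else 0)
      ≤ d * K * n * q + d * (n - 1) * x := by
  split_ifs with h
  · have h1 : 0 ≤ (d - q) * ((n - 1) * (x - 1)) :=
      mul_nonneg (by omega) (mul_nonneg (by omega) (by omega))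
    have h2 : 0 ≤ q * (d * n * (K - x - 1)) :=
      mul_nonneg hq (mul_nonneg (by positivity) (by omega))
    have h3 : 0 ≤ q * (n * (d - 1) + 1) :=
      mul_nonneg hq (by nlinarith)
    nlinarith
  · obtain rfl | rfl : x = 0 ∨ x = K := by omega
    · have : 0 ≤ d * K * n * q := by positivity
      simpa using this
    · have h1 : 0 ≤ (d - q) * ((n - 1) * x) :=
        mul_nonneg (by omega) (mul_nonneg (by omega) hx)
      nlinarith

/-- the fractional arboricity of `D₀` equals
`d(k+1)n / ((d+1)n − 1)`: the density inequality holds for every vertex set `X`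
with `|X| ≥ 2`, and equality holds for `X = V(D₀)`, which has `(d+1)n` vertices
and `d(k+1)n` arcs. -/
theorem stmt10 (n k d : ℕ) (hk : 0 < k) (hd : 0 < d) (hnk : k + 1 ≤ n) :
    (∀ X : Set (ZMod n ⊕ ZMod n × Fin d), 2 ≤ X.ncard →
      ((d + 1) * n - 1) *
          {a : ZMod n × Fin (k + 1) × Fin d |
            tail0 n k d a ∈ X ∧ head0 n k d a ∈ X}.ncard
        ≤ d * (k + 1) * n * (X.ncard - 1)) ∧
    (Set.univ : Set (ZMod n ⊕ ZMod n × Fin d)).ncard = (d + 1) * n ∧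
    (Set.univ : Set (ZMod n × Fin (k + 1) × Fin d)).ncard = d * (k + 1) * n ∧
    ((d + 1) * n - 1) * (Set.univ : Set (ZMod n × Fin (k + 1) × Fin d)).ncard
      = d * (k + 1) * n * ((Set.univ : Set (ZMod n ⊕ ZMod n × Fin d)).ncard - 1) := by
  have : NeZero n := ⟨by omega⟩
  have hverts : (Set.univ : Set (ZMod n ⊕ ZMod n × Fin d)).ncard = (d + 1) * n := by
    simp [Set.ncard_univ, Nat.card_eq_fintype_card, ZMod.card]
    ring
  have harcs : (Set.univ : Set (ZMod n × Fin (k + 1) × Fin d)).ncard = d * (k + 1) * n := by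
    simp [Set.ncard_univ, Nat.card_eq_fintype_card, ZMod.card]
    ring
  refine ⟨fun X _ => ?_, hverts, harcs, by rw [hverts, harcs]; ring⟩
  classical
  set P : Finset (ZMod n) := {u | Sum.inl u ∈ X} with hP
  set x : ZMod n → ℕ := fun i => #{j : Fin (k + 1) | i + (j.val : ZMod n) ∈ P} with hx
  set q : ZMod n → ℕ := fun i => #{t : Fin d | Sum.inr (i, t) ∈ X} with hq
  have hX : X.ncard = #P + ∑ i, q i := by
    rw [Set.ncard_eq_toFinset_card', ← Set.filter_mem_univ_eq_toFinset]
    simp only [hP, hq, card_filter, Fintype.sum_sum_type, Fintype.sum_prod_type]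
  have hA : {a : ZMod n × Fin (k + 1) × Fin d |
      tail0 n k d a ∈ X ∧ head0 n k d a ∈ X}.ncard = ∑ i, q i * x i := by
    have hfilter : {a : ZMod n × Fin (k + 1) × Fin d | tail0 n k d a ∈ X ∧ head0 n k d a ∈ X} =
        (({a | a.1 + (a.2.1.val : ZMod n) ∈ P ∧ Sum.inr (a.1, a.2.2) ∈ X} :
          Finset (ZMod n × Fin (k + 1) × Fin d)) : Set (ZMod n × Fin (k + 1) × Fin d)) := by
      ext a
      simp [hP, tail0, head0]
    rw [hfilter, Set.ncard_coe_finset]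
    simp only [hq, hx, card_filter, Fintype.sum_prod_type, sum_mul_sum]
    refine sum_congr rfl fun i _ => ?_
    rw [sum_comm]
    refine sum_congr rfl fun t _ => sum_congr rfl fun j _ => ?_
    split_ifs <;> simp_all
  rw [hX, hA]
  rcases P.eq_empty_or_nonempty with hempty | hne
  · simp [hx, hempty]
  have hsum := sum_le_sum fun (i : ZMod n) (_ : i ∈ univ) =>
    class_bound (n := n) (K := k + 1) (d := d) (x := x i) (q := q i) (by omega) (by omega)
      (by omega) (by exact_mod_cast (card_le_univ _).trans (by simp)) (by omega)
      (by exact_mod_cast (card_le_univ _).trans (by simp))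
  have hdeg : ∑ i, (x i : ℤ) = (k + 1) * #P := by exact_mod_cast sum_card_window (k + 1) P
  simp only [sum_add_distrib, ← mul_sum, hdeg] at hsum
  have hpos : 1 ≤ #P := hne.card_pos
  have hgain : (d * (k + 1) * (n - #P) : ℤ) ≤
      ∑ i, if 0 < (x i : ℤ) ∧ (x i : ℤ) < k + 1 then (d * (n - 1) : ℤ) else 0 := by
    have hnonneg : (0 : ℤ) ≤ d * (n - 1) := mul_nonneg (by omega) (by omega)
    by_cases huniv : P = univ
    · rw [huniv, card_univ, ZMod.card]
      simpa using sum_nonneg fun i _ => by split_ifs <;> simp [hnonneg]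
    · have hmixed := le_card_mixed_windows (K := k + 1) (by omega) hnk P hne huniv
      have hiff (i : ZMod n) : (0 < (x i : ℤ) ∧ (x i : ℤ) < k + 1) ↔
          (∃ j : Fin (k + 1), i + (j.val : ZMod n) ∈ P) ∧
            ∃ j : Fin (k + 1), i + (j.val : ZMod n) ∉ P := by
        refine and_congr ?_ ?_
        · simp [hx, card_pos, Finset.Nonempty]
        · have hlt := card_lt_iff_ne_univ {j : Fin (k + 1) | i + (j.val : ZMod n) ∈ P}
          rw [Fintype.card_fin, Ne, filter_eq_self] at hlt
          rw [← not_forall]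
          simpa only [hx, mem_univ, true_imp_iff, Nat.cast_add, Nat.cast_one]
            using Nat.cast_lt (α := ℤ).trans hlt
      simp only [hiff]
      rw [← sum_filter, sum_const, nsmul_eq_mul]
      have h1 : ((k + 1 : ℕ) : ℤ) * (d * (n - 1)) ≤ _ :=
        mul_le_mul_of_nonneg_right (Int.ofNat_le.2 hmixed) hnonneg
      refine le_trans ?_ h1
      have h2 : (0 : ℤ) ≤ d * (k + 1) * (#P - 1) := mul_nonneg (by positivity) (by omega)
      push_cast
      nlinarith
  have hR : 1 ≤ (d + 1) * n := Nat.mul_pos (by omega) (by omega)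
  zify [hR, show 1 ≤ #P + ∑ i, q i by omega]
  nlinarith
end

section
/- Let n, k, d be positive integers with n ≥ k+1, and let D₀ be the digraph defined in the context. Let V* ⊆ V(D₀) with |V*| ≥ 2 be such that |A[V*]|/(|V*|−1) = γ(D₀), i.e. |A[V*]|·(|X|−1) ≥ |A[X]|·(|V*|−1) for every X ⊆ V(D₀) with |X| ≥ 2, and suppose V* is maximal under inclusion among sets with this property. If V* ∩ W_{i₀} ≠ ∅ for some i₀ ∈ ℤ_n, then W_{i₀} ⊆ V*. -/
/-- The arcs of `D₀` with both ends in `X`. -/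
def arcs0 (n k d : ℕ) (X : Set (ZMod n ⊕ ZMod n × Fin d)) :
    Set (ZMod n × Fin (k + 1) × Fin d) :=
  {a : ZMod n × Fin (k + 1) × Fin d | tail0 n k d a ∈ X ∧ head0 n k d a ∈ X}

/-- Adding a new vertex `(i, t)` to `X` adds one arc for each in-neighbour of `(i, t)` in `X`. -/
theorem ncard_arcs0_insert_inr (n k d : ℕ) [NeZero n] (X : Set (ZMod n ⊕ ZMod n × Fin d))
    (i : ZMod n) (t : Fin d) (h : Sum.inr (i, t) ∉ X) :
    (arcs0 n k d (insert (Sum.inr (i, t)) X)).ncard = (arcs0 n k d X).ncard +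
      {j : Fin (k + 1) | (Sum.inl (i + (j.val : ZMod n)) : ZMod n ⊕ ZMod n × Fin d) ∈ X}.ncard := by
  have hinj : Function.Injective
      (fun j : Fin (k + 1) => ((i, j, t) : ZMod n × Fin (k + 1) × Fin d)) := by
    intro a b hab
    simpa using hab
  rw [← Set.ncard_image_of_injective _ hinj, ← Set.ncard_union_eq _ (Set.toFinite _)
    (Set.toFinite _)]
  · congr 1
    ext ⟨a, j, b⟩
    simp only [arcs0, tail0, head0, Set.mem_ofPred_eq, Set.mem_insert_iff, Set.mem_union,
      Set.mem_image, reduceCtorEq, false_or, Sum.inr.injEq, Prod.mk.injEq]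
    constructor
    · rintro ⟨h1, ⟨rfl, rfl⟩ | h2⟩
      · exact Or.inr ⟨j, h1, rfl, rfl, rfl⟩
      · exact Or.inl ⟨h1, h2⟩
    · rintro (⟨h1, h2⟩ | ⟨j', h1, rfl, rfl, rfl⟩)
      · exact ⟨h1, Or.inr h2⟩
      · exact ⟨h1, Or.inl ⟨rfl, rfl⟩⟩
  · rw [Set.disjoint_left]
    rintro _ ⟨_, h2⟩ ⟨j, _, rfl⟩
    exact h h2

/-- A set with at most one vertex spans no arc. -/
theorem arcs0_eq_empty_of_ncard_le_one (n k d : ℕ) [NeZero n]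
    (X : Set (ZMod n ⊕ ZMod n × Fin d)) (h : X.ncard ≤ 1) : arcs0 n k d X = ∅ := by
  rw [Set.eq_empty_iff_forall_notMem]
  rintro a ⟨h1, h2⟩
  have := (Set.ncard_le_one (Set.toFinite X)).1 h _ h1 _ h2
  simp [tail0, head0] at this

/-- a maximal witness `V*` of the fractional arboricity of `D₀`
which meets `W_{i₀}` contains all of `W_{i₀}`. -/
theorem stmt11 (n k d : ℕ) (hk : 0 < k) (hd : 0 < d) (hnk : k + 1 ≤ n)
    (Vs : Set (ZMod n ⊕ ZMod n × Fin d)) (h2 : 2 ≤ Vs.ncard)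
    (hwit : ∀ X : Set (ZMod n ⊕ ZMod n × Fin d), 2 ≤ X.ncard →
      (arcs0 n k d X).ncard * (Vs.ncard - 1) ≤ (arcs0 n k d Vs).ncard * (X.ncard - 1))
    (hmax : ∀ S : Set (ZMod n ⊕ ZMod n × Fin d), Vs ⊆ S → 2 ≤ S.ncard →
      (∀ X : Set (ZMod n ⊕ ZMod n × Fin d), 2 ≤ X.ncard →
        (arcs0 n k d X).ncard * (S.ncard - 1) ≤ (arcs0 n k d S).ncard * (X.ncard - 1)) →
      S = Vs)
    (i₀ : ZMod n) (hmeet : ∃ t : Fin d, Sum.inr (i₀, t) ∈ Vs) :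
    ∀ t : Fin d, Sum.inr (i₀, t) ∈ Vs := by
  have : NeZero n := ⟨by omega⟩
  obtain ⟨t₀, ht₀⟩ := hmeet
  intro t
  by_contra ht
  set w : ZMod n ⊕ ZMod n × Fin d := Sum.inr (i₀, t₀) with hw
  set e := {j : Fin (k + 1) |
    (Sum.inl (i₀ + (j.val : ZMod n)) : ZMod n ⊕ ZMod n × Fin d) ∈ Vs}.ncard with he
  have hadd := ncard_arcs0_insert_inr n k d Vs i₀ t ht
  have hdel := ncard_arcs0_insert_inr n k d (Vs \ {w}) i₀ t₀ (by simp [hw])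
  rw [← hw, Set.insert_sdiff_singleton, Set.insert_eq_of_mem ht₀] at hdel
  simp only [Set.mem_sdiff, Set.mem_singleton_iff, hw, reduceCtorEq, not_false_eq_true,
    and_true] at hdel
  rw [← hw, ← he] at hdel
  rw [← he] at hadd
  have hcard := Set.ncard_insert_of_notMem ht (Set.toFinite Vs)
  have hcard' := Set.ncard_sdiff_singleton_add_one ht₀ (Set.toFinite Vs)
  obtain ⟨m, hm⟩ : ∃ m, Vs.ncard = m + 2 := ⟨Vs.ncard - 2, by omega⟩
  have hkey : (arcs0 n k d Vs).ncard ≤ e * (m + 1) := by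
    rcases Nat.eq_zero_or_pos m with rfl | hmpos
    · rw [arcs0_eq_empty_of_ncard_le_one n k d (Vs \ {w}) (by omega)] at hdel
      simp [hdel]
    · have h := hwit (Vs \ {w}) (by omega)
      rw [show (Vs \ {w}).ncard - 1 = m by omega, show Vs.ncard - 1 = m + 1 by omega] at h
      nlinarith
  refine ht ?_
  rw [← hmax _ (Set.subset_insert (Sum.inr (i₀, t)) Vs) (by omega) ?_]
  · exact Set.mem_insert _ _
  · intro X hX
    have h := hwit X hX
    rw [show Vs.ncard - 1 = m + 1 by omega] at h
    rw [hadd, hcard, show Vs.ncard + 1 - 1 = m + 2 by omega]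
    refine Nat.le_of_mul_le_mul_right ?_ (Nat.succ_pos m)
    calc (arcs0 n k d X).ncard * (m + 2) * (m + 1)
        = (arcs0 n k d X).ncard * (m + 1) * (m + 2) := by ring
      _ ≤ (arcs0 n k d Vs).ncard * (X.ncard - 1) * (m + 2) := Nat.mul_le_mul_right _ h
      _ = ((arcs0 n k d Vs).ncard * (m + 1) + (arcs0 n k d Vs).ncard) * (X.ncard - 1) := by ring
      _ ≤ ((arcs0 n k d Vs).ncard * (m + 1) + e * (m + 1)) * (X.ncard - 1) := by gcongr
      _ = ((arcs0 n k d Vs).ncard + e) * (X.ncard - 1) * (m + 1) := by ring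
end

section
/- For all positive integers k, d and every real ε > 0, there exists a digraph D = (V, A) with the following properties: (i) D is acyclic (it contains no directed cycle); (ii) the underlying graph of D is bipartite; (iii) Δ⁻(D) ≤ k+1; (iv) |A[X]| < (k + (d−k)/(d+1) + ε)·|X| for every nonempty X ⊆ V (i.e. (1/2)·mad(D) < k + (d−k)/(d+1) + ε); and (v) A cannot be partitioned into k+1 pseudo-branchings C₁, …, C_k, C_{k+1} with Δ⁺(C_{k+1}) ≤ d. -/
/-- The length of the intersection of the real intervals `[x, x']` and `[y, y']`. -/
noncomputable def intervalOverlap (x x' y y' : ℝ) : ℝ := max 0 (min x' y' - max x y)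

theorem intervalOverlap_nonneg (x x' y y' : ℝ) : 0 ≤ intervalOverlap x x' y y' :=
  le_max_left _ _

theorem intervalOverlap_comm (x x' y y' : ℝ) :
    intervalOverlap x x' y y' = intervalOverlap y y' x x' := by
  simp only [intervalOverlap, min_comm, max_comm x y]

theorem intervalOverlap_eq_clamp_sub {x x' y y' : ℝ} (hx : x ≤ x') (hy : y ≤ y') :
    intervalOverlap x x' y y' = max y (min x' y') - max y (min x y') := by
  unfold intervalOverlap
  grind

theorem sum_intervalOverlap {q y y' : ℝ} (hq : 0 ≤ q) (hy : y ≤ y') (n : ℕ) :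
    ∑ t : Fin n, intervalOverlap (t * q) ((t + 1) * q) y y' =
      max y (min (n * q) y') - max y (min 0 y') := by
  have h : ∀ t : ℕ, intervalOverlap (t * q) ((t + 1) * q) y y' =
      max y (min (((t + 1 : ℕ) : ℝ) * q) y') - max y (min ((t : ℝ) * q) y') := by
    intro t
    rw [intervalOverlap_eq_clamp_sub (by nlinarith) hy]
    push_cast
    rfl
  rw [Fin.sum_univ_eq_sum_range (fun t : ℕ => intervalOverlap (t * q) ((t + 1) * q) y y') n,
    Finset.sum_congr rfl (fun t _ => h t),
    Finset.sum_range_sub (fun t : ℕ => max y (min ((t : ℝ) * q) y'))]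
  simp

/-- A load supported on at most two points, of total at most `m / 2`, is dominated by the fibre
sizes of some function on `Fin m`. -/
theorem exists_fiber_card_ge {ι : Type*} [DecidableEq ι] {m : ℕ} (hm : 2 ≤ m) (o : ι → ℝ) (a b : ι)
    (ho : ∀ i, 0 ≤ o i) (hsupp : ∀ i, i ≠ a → i ≠ b → o i = 0) (ha : o a ≤ m / 2)
    (hab : a ≠ b → o a + o b ≤ m / 2) :
    ∃ f : Fin m → ι, ∀ i, o i ≤ (Finset.univ.filter fun j => f j = i).card := by
  have hm' : (2 : ℝ) ≤ m := by exact_mod_cast hm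
  by_cases h : a = b
  · subst h
    refine ⟨fun _ => a, fun i => ?_⟩
    by_cases hi : i = a
    · subst hi
      simp only [Finset.filter_true, Finset.card_univ, Fintype.card_fin]
      linarith
    · rw [hsupp i hi hi]
      positivity
  · have hab := hab h
    have hceil := Nat.ceil_lt_add_one (ho a)
    have hle : ⌈o a⌉₊ ≤ m := by
      apply Nat.ceil_le.2
      linarith
    refine ⟨fun j => if (j : ℕ) < ⌈o a⌉₊ then a else b, fun i => ?_⟩
    have hcard : (Finset.univ.filter fun j : Fin m => (j : ℕ) < ⌈o a⌉₊).card = ⌈o a⌉₊ := by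
      rw [Fin.card_filter_val_lt, min_eq_right hle]
    by_cases hi : i = a
    · subst hi
      have : (Finset.univ.filter fun j : Fin m => (if (j : ℕ) < ⌈o i⌉₊ then i else b) = i) =
          Finset.univ.filter fun j : Fin m => (j : ℕ) < ⌈o i⌉₊ := by
        ext j
        have := Ne.symm h
        simp [ite_eq_left_iff, this, Nat.lt_ceil]
      rw [this, hcard]
      exact Nat.le_ceil _
    · by_cases hi' : i = b
      · subst hi'
        have heq : (Finset.univ.filter fun j : Fin m => (if (j : ℕ) < ⌈o a⌉₊ then a else i) = i) =
            (Finset.univ.filter fun j : Fin m => (j : ℕ) < ⌈o a⌉₊)ᶜ := by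
          ext j
          simp [h]
        rw [heq, Finset.card_compl, hcard, Fintype.card_fin, Nat.cast_sub hle]
        linarith
      · rw [hsupp i hi hi']
        positivity

/-- If `n` intervals of length `q ≤ m / 2` fit into `s` intervals of length `m - q`, then there is
an `m`-uniform bipartite multigraph between `n` and `s` vertices all of whose subgraphs have at most
`m - q` edges per vertex. -/
theorem exists_sparse_bipartite {m n s : ℕ} (hm : 2 ≤ m) {q : ℝ} (hq : 0 < q) (hqm : q ≤ m / 2)
    (hfit : n * q ≤ s * (m - q)) :
    ∃ f : Fin n → Fin m → Fin s, ∀ (T : Finset (Fin n)) (S : Finset (Fin s)),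
      ((∑ t ∈ T, (Finset.univ.filter fun j => f t j ∈ S).card : ℕ) : ℝ) ≤
        (m - q) * (T.card + S.card) := by
  have hm' : (2 : ℝ) ≤ m := by exact_mod_cast hm
  obtain ⟨L, hL⟩ : ∃ L : ℝ, L = m - q := ⟨_, rfl⟩
  rw [← hL] at hfit ⊢
  have hqL : q ≤ L := by linarith
  have hLpos : 0 < L := by linarith
  let o : Fin n → Fin s → ℝ := fun t i =>
    intervalOverlap (t * q) ((t + 1) * q) (i * L) ((i + 1) * L)
  have ho : ∀ t i, 0 ≤ o t i := fun t i => intervalOverlap_nonneg _ _ _ _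
  have hrow : ∀ t, ∑ i, o t i = q := by
    intro t
    have ht : ((t : ℕ) : ℝ) + 1 ≤ n := by exact_mod_cast t.2
    have h1 : ((t : ℕ) + 1 : ℝ) * q ≤ s * L := by nlinarith
    have h0 : 0 ≤ ((t : ℕ) : ℝ) * q := by positivity
    have h2 : ((t : ℕ) : ℝ) * q ≤ ((t : ℕ) + 1 : ℝ) * q := by nlinarith
    simp only [o]
    simp_rw [intervalOverlap_comm (((_ : ℕ) : ℝ) * q)]
    rw [sum_intervalOverlap hLpos.le h2, min_eq_right h1, max_eq_right h2,
      min_eq_left (h0.trans h2), max_eq_left h0]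
    ring
  have hcol : ∀ i, ∑ t, o t i ≤ L := by
    intro i
    have h : ((i : ℕ) : ℝ) * L ≤ ((i : ℕ) + 1 : ℝ) * L := by nlinarith
    simp only [o]
    rw [sum_intervalOverlap hq.le h]
    have h1 := max_le h (min_le_right ((n : ℝ) * q) (((i : ℕ) + 1 : ℝ) * L))
    have h2 := le_max_left (((i : ℕ) : ℝ) * L) (min 0 (((i : ℕ) + 1 : ℝ) * L))
    linarith
  have hf : ∀ t, ∃ g : Fin m → Fin s, ∀ i, o t i ≤ (Finset.univ.filter fun j => g j = i).card := by
    intro t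
    have ht : ((t : ℕ) : ℝ) + 1 ≤ n := by exact_mod_cast t.2
    have h0 : 0 ≤ ((t : ℕ) : ℝ) * q := by positivity
    have h1 : ((t : ℕ) : ℝ) * q < s * L := by nlinarith
    obtain ⟨a, ha⟩ : ∃ a, a = ⌊((t : ℕ) : ℝ) * q / L⌋₊ := ⟨_, rfl⟩
    have hle : (a : ℝ) * L ≤ (t : ℕ) * q := by
      rw [← le_div_iff₀ hLpos, ha]
      exact Nat.floor_le (by positivity)
    have hlt : ((t : ℕ) : ℝ) * q < (a + 1) * L := by
      rw [← div_lt_iff₀ hLpos, ha]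
      exact Nat.lt_floor_add_one _
    have has : a < s := by
      have : (a : ℝ) < s := lt_of_mul_lt_mul_right (hle.trans_lt h1) hLpos.le
      exact_mod_cast this
    have hzero : ∀ i : Fin s, (i : ℕ) ≠ a → (i : ℕ) ≠ a + 1 → o t i = 0 := by
      intro i hi hi'
      apply max_eq_left
      rcases lt_or_ge (i : ℕ) a with h | h
      · have h' : ((i : ℕ) : ℝ) + 1 ≤ a := by exact_mod_cast h
        have h3 : ((i : ℕ) + 1 : ℝ) * L ≤ a * L := by gcongr
        have h4 := min_le_right (((t : ℕ) + 1 : ℝ) * q) (((i : ℕ) + 1 : ℝ) * L)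
        have h5 := le_max_left (((t : ℕ) : ℝ) * q) (((i : ℕ) : ℝ) * L)
        linarith
      · have h' : (a : ℝ) + 2 ≤ (i : ℕ) := by
          have : a + 2 ≤ (i : ℕ) := by omega
          exact_mod_cast this
        have h3 : ((a : ℝ) + 2) * L ≤ ((i : ℕ) : ℝ) * L := by gcongr
        have h4 := min_le_left (((t : ℕ) + 1 : ℝ) * q) (((i : ℕ) + 1 : ℝ) * L)
        have h5 := le_max_right (((t : ℕ) : ℝ) * q) (((i : ℕ) : ℝ) * L)
        linarith
    have hb : ∃ b : Fin s, ∀ i : Fin s, (i : ℕ) = a + 1 → i = b := by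
      by_cases h : a + 1 < s
      · exact ⟨⟨a + 1, h⟩, fun i hi => Fin.ext hi⟩
      · exact ⟨⟨a, has⟩, fun i hi => absurd (hi ▸ i.2) h⟩
    obtain ⟨b, hb⟩ := hb
    refine exists_fiber_card_ge hm (o t) ⟨a, has⟩ b (ho t) ?_ ?_ ?_
    · intro i hi hi'
      exact hzero i (fun h => hi (Fin.ext h)) (fun h => hi' (hb i h))
    · refine le_trans ?_ hqm
      rw [← hrow t]
      exact Finset.single_le_sum (fun i _ => ho t i) (Finset.mem_univ _)
    · intro hne
      refine le_trans ?_ hqm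
      rw [← hrow t, ← Finset.sum_pair hne]
      exact Finset.sum_le_sum_of_subset_of_nonneg (Finset.subset_univ _) (fun i _ _ => ho t i)
  choose f hf using hf
  refine ⟨f, fun T S => ?_⟩
  have hpoint : ∀ t, ((Finset.univ.filter fun j => f t j ∈ S).card : ℝ) ≤ ∑ i ∈ S, o t i + L := by
    intro t
    have hS : ((Finset.univ.filter fun j => f t j ∈ S).card : ℝ) =
        ∑ i ∈ S, ((Finset.univ.filter fun j => f t j = i).card : ℝ) := by
      rw [Finset.card_eq_sum_card_fiberwise (f := f t) (t := S) (fun j hj => by simpa using hj)]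
      push_cast
      refine Finset.sum_congr rfl fun i hi => ?_
      congr 2
      ext j
      simp only [Finset.mem_filter, Finset.mem_univ, true_and]
      exact ⟨fun h => h.2, fun h => ⟨h ▸ hi, h⟩⟩
    have hall : ∑ i, ((Finset.univ.filter fun j => f t j = i).card : ℝ) = m := by
      have := Finset.card_eq_sum_card_fiberwise (f := f t) (s := Finset.univ) (t := Finset.univ)
        (fun j _ => by simp)
      rw [Finset.card_univ, Fintype.card_fin] at this
      exact_mod_cast this.symm
    have hle : ∑ i ∈ S, (((Finset.univ.filter fun j => f t j = i).card : ℝ) - o t i) ≤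
        ∑ i, (((Finset.univ.filter fun j => f t j = i).card : ℝ) - o t i) :=
      Finset.sum_le_sum_of_subset_of_nonneg (Finset.subset_univ _)
        (fun i _ _ => sub_nonneg.2 (hf t i))
    rw [Finset.sum_sub_distrib, Finset.sum_sub_distrib, hall, hrow, ← hS] at hle
    linarith
  calc ((∑ t ∈ T, (Finset.univ.filter fun j => f t j ∈ S).card : ℕ) : ℝ)
      = ∑ t ∈ T, ((Finset.univ.filter fun j => f t j ∈ S).card : ℝ) := by push_cast; rfl
    _ ≤ ∑ t ∈ T, (∑ i ∈ S, o t i + L) := Finset.sum_le_sum fun t _ => hpoint t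
    _ = ∑ i ∈ S, ∑ t ∈ T, o t i + T.card * L := by
        rw [Finset.sum_add_distrib, Finset.sum_comm, Finset.sum_const, nsmul_eq_mul]
    _ ≤ ∑ i ∈ S, L + T.card * L := by
        gcongr with i hi
        exact (Finset.sum_le_sum_of_subset_of_nonneg (Finset.subset_univ T)
          (fun t _ _ => ho t i)).trans (hcol i)
    _ = L * (T.card + S.card) := by
        rw [Finset.sum_const, nsmul_eq_mul]
        ring

/-- If more than `d * s` vertices each receive `m + 1` arcs from a set of `s` vertices, then those
arcs do not split into `m + 1` classes, each with at most one arc into every vertex, such that the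
last class has out-degrees at most `d`. -/
theorem not_exists_bounded_pseudobranching {m n s d : ℕ} (hn : d * s < n)
    (f : Fin n → Fin (m + 1) → Fin s) (C : Fin (m + 1) → Set (Fin n × Fin (m + 1)))
    (hcover : (⋃ i, C i) = Set.univ)
    (hin : ∀ i t, {a : Fin n × Fin (m + 1) | a ∈ C i ∧ a.1 = t}.ncard ≤ 1)
    (hout : ∀ v, {a : Fin n × Fin (m + 1) | a ∈ C (Fin.last m) ∧ f a.1 a.2 = v}.ncard ≤ d) :
    False := by
  have hex : ∀ t, ∃ j, (t, j) ∈ C (Fin.last m) := by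
    intro t
    have hcol : ∀ j, ∃ i, (t, j) ∈ C i := fun j => Set.mem_iUnion.1 (hcover ▸ Set.mem_univ _)
    choose c hc using hcol
    have hinj : Function.Injective c := by
      intro j j' hjj
      have := (Set.ncard_le_one (Set.toFinite _)).1 (hin (c j) t) (t, j) ⟨hc j, rfl⟩
        (t, j') ⟨hjj ▸ hc j', rfl⟩
      exact (Prod.ext_iff.1 this).2
    obtain ⟨j, hj⟩ := Finite.surjective_of_injective hinj (Fin.last m)
    exact ⟨j, hj ▸ hc j⟩
  choose g hg using hex
  obtain ⟨v, hv⟩ := Fintype.exists_lt_card_fiber_of_mul_lt_card (fun t => f t (g t))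
    (n := d) (by simpa [mul_comm] using hn)
  have hle : (Finset.univ.filter fun t => f t (g t) = v).card ≤
      {a : Fin n × Fin (m + 1) | a ∈ C (Fin.last m) ∧ f a.1 a.2 = v}.ncard := by
    rw [← Set.ncard_coe_finset]
    refine Set.ncard_le_ncard_of_injOn (fun t => (t, g t)) (fun t ht => ⟨hg t, by simpa using ht⟩)
      (fun t _ t' _ h => (Prod.ext_iff.1 h).1) (Set.toFinite _)
  exact absurd (hv.trans_le hle) (not_lt.2 (hout v))

/-- sharpness of the maximum average degree bound for the
pseudo-branching version of the Nine Dragon Tree conjecture for digraphs. -/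
theorem stmt13 (k d : ℕ) (hk : 0 < k) (hd : 0 < d) (ε : ℝ) (hε : 0 < ε) :
    ∃ (V A : Type) (_ : Fintype V) (_ : Fintype A) (tail head : A → V),
      (∀ a : A, tail a ≠ head a) ∧
      -- acyclic: no directed cycle
      (∀ v : V, ¬ Relation.TransGen (fun u w : V => ∃ a : A, tail a = u ∧ head a = w) v v) ∧
      -- underlying graph bipartite
      (∃ P : Set V, ∀ a : A,
        (tail a ∈ P ∧ head a ∉ P) ∨ (tail a ∉ P ∧ head a ∈ P)) ∧
      -- max in-degree at most k+1
      (∀ v : V, {a : A | head a = v}.ncard ≤ k + 1) ∧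
      -- (1/2)·mad(D) < k + (d-k)/(d+1) + ε
      (∀ X : Set V, X.Nonempty →
        ({a : A | tail a ∈ X ∧ head a ∈ X}.ncard : ℝ)
          < ((k : ℝ) + ((d : ℝ) - (k : ℝ)) / ((d : ℝ) + 1) + ε) * (X.ncard : ℝ)) ∧
      -- no decomposition into k+1 pseudo-branchings, the last of which has Δ⁺ ≤ d
      ¬ ∃ C : Fin (k + 1) → Set A,
          (∀ i j, i ≠ j → Disjoint (C i) (C j)) ∧
          (⋃ i, C i) = Set.univ ∧
          (∀ i, ∀ v : V, {a : A | a ∈ C i ∧ head a = v}.ncard ≤ 1) ∧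
          (∀ v : V, {a : A | a ∈ C (Fin.last k) ∧ tail a = v}.ncard ≤ d) := by
  classical
  have hk' : (1 : ℝ) ≤ k := by exact_mod_cast hk
  have hd' : (1 : ℝ) ≤ d := by exact_mod_cast hd
  obtain ⟨r, hr⟩ : ∃ r : ℝ, r = (k + 1) / (d + 1) := ⟨_, rfl⟩
  have hrd : r * (d + 1) = k + 1 := by rw [hr]; field_simp
  have hrpos : 0 < r := by rw [hr]; positivity
  obtain ⟨δ, hδ, hδε, hδr⟩ : ∃ δ : ℝ, 0 < δ ∧ δ < ε ∧ δ < r := by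
    obtain ⟨δ, hδ, h⟩ := exists_between (lt_min hε hrpos)
    exact ⟨δ, hδ, h.trans_le (min_le_left _ _), h.trans_le (min_le_right _ _)⟩
  obtain ⟨s, hs⟩ := exists_nat_ge ((r - δ) / ((d + 1) * δ))
  rw [div_le_iff₀ (by positivity)] at hs
  have hbound : (k : ℝ) + ((d : ℝ) - k) / (d + 1) = k + 1 - r := by
    rw [hr]; field_simp; ring
  obtain ⟨f, hf⟩ := exists_sparse_bipartite (m := k + 1) (n := d * s + 1) (s := s) (q := r - δ)
    (by omega) (by linarith) (by push_cast; nlinarith) (by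
      push_cast
      linear_combination hs + s * hrd)
  refine ⟨Fin s ⊕ Fin (d * s + 1), Fin (d * s + 1) × Fin (k + 1), inferInstance, inferInstance,
    fun a => Sum.inl (f a.1 a.2), fun a => Sum.inr a.1, fun a => Sum.inl_ne_inr, ?_,
    ⟨Set.range Sum.inl, fun a => Or.inl ⟨⟨_, rfl⟩, by simp⟩⟩, ?_, ?_, ?_⟩
  · intro v hv
    obtain ⟨_, ⟨a, ha, -⟩, -⟩ := Relation.TransGen.head'_iff.1 hv
    obtain ⟨_, -, ⟨b, -, hb⟩⟩ := Relation.TransGen.tail'_iff.1 hv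
    exact Sum.inl_ne_inr (ha.trans hb.symm)
  · rintro (i | t)
    · simp
    · calc {a : Fin (d * s + 1) × Fin (k + 1) |
            (Sum.inr a.1 : Fin s ⊕ Fin (d * s + 1)) = Sum.inr t}.ncard
          ≤ (Set.univ : Set (Fin (k + 1))).ncard :=
            Set.ncard_le_ncard_of_injOn Prod.snd (fun _ _ => Set.mem_univ _)
              (fun a ha b hb h => Prod.ext
                ((Sum.inr_injective ha).trans (Sum.inr_injective hb).symm) h) (Set.toFinite _)
        _ = k + 1 := by simp [Set.ncard_univ]
  · intro X hX
    have hXpos : (0 : ℝ) < X.ncard := by exact_mod_cast (Set.ncard_pos (Set.toFinite _)).2 hX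
    let T := Finset.univ.filter fun t : Fin (d * s + 1) => Sum.inr t ∈ X
    let S := Finset.univ.filter fun i : Fin s => Sum.inl i ∈ X
    have hXcard : X.ncard = T.card + S.card := by
      have : X = ((S.disjSum T : Finset _) : Set (Fin s ⊕ Fin (d * s + 1))) := by
        ext (i | t) <;> simp [S, T]
      rw [this, Set.ncard_coe_finset, Finset.card_disjSum, add_comm]
    have hAcard : {a : Fin (d * s + 1) × Fin (k + 1) |
        (Sum.inl (f a.1 a.2) : Fin s ⊕ Fin (d * s + 1)) ∈ X ∧ Sum.inr a.1 ∈ X}.ncard =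
        ∑ t ∈ T, (Finset.univ.filter fun j => f t j ∈ S).card := by
      rw [← Finset.card_sigma, ← Set.ncard_coe_finset]
      refine Set.ncard_congr (fun a _ => ⟨a.1, a.2⟩) ?_ ?_ ?_
      · rintro ⟨t, j⟩ ⟨h1, h2⟩
        simpa [S, T] using ⟨h2, h1⟩
      · rintro ⟨t, j⟩ ⟨t', j'⟩ - - h
        simpa using h
      · rintro ⟨t, j⟩ h
        have h' : Sum.inr t ∈ X ∧ Sum.inl (f t j) ∈ X := by simpa [S, T] using h
        exact ⟨(t, j), ⟨h'.2, h'.1⟩, rfl⟩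
    have hmain := hf T S
    rw [← hAcard] at hmain
    refine hmain.trans_lt ?_
    rw [hbound, ← Nat.cast_add, ← hXcard]
    refine mul_lt_mul_of_pos_right ?_ hXpos
    push_cast
    linarith
  · rintro ⟨C, -, hcover, hin, hout⟩
    refine not_exists_bounded_pseudobranching (Nat.lt_succ_self _) f C hcover
      (fun i t => ?_) (fun v => ?_)
    · simpa using hin i (Sum.inr t)
    · simpa using hout (Sum.inl v)
end
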